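/- arXiv:1902.03505 — 7 statements merged into one kernel-verified Lean document; each statement's English description precedes it below -/
import Mathlib

section
/- Let d, N ≥ 2 with N ≥ d and let p ∈ (0,∞). If X* ∈ S(N,d) attains the minimum F_{p,N,d} of the p-frame potential FP_{p,N,d} over S(N,d), then the vectors of X* span ℝ^d (i.e., X* is a frame for ℝ^d). -/
open scoped RealInnerProductSpace
open Real

/-- The `p`-frame potential of an `N`-tuple of vectors in `ℝ^d`:
`FP_{p,N,d}(X) = Σ_{k≠ℓ} |⟨x_k,x_ℓ⟩|^p` (sum over ordered pairs). -/
noncomputable def framePotential (d N : ℕ) (p : ℝ)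
    (X : Fin N → EuclideanSpace ℝ (Fin d)) : ℝ :=
  ∑ k : Fin N, ∑ l : Fin N, if k ≠ l then |⟪X k, X l⟫| ^ p else 0

/-- Any minimizer of the `p`-frame potential over `S(N,d)` spans `ℝ^d`,
i.e. it is a frame for `ℝ^d`. -/
theorem minimizer_of_pFramePotential_is_frame
    (d N : ℕ) (hd : 2 ≤ d) (hN : 2 ≤ N) (hdN : d ≤ N)
    (p : ℝ) (hp : 0 < p)
    (X : Fin N → EuclideanSpace ℝ (Fin d)) (hX : ∀ i, ‖X i‖ = 1)
    (hmin : ∀ Y : Fin N → EuclideanSpace ℝ (Fin d), (∀ i, ‖Y i‖ = 1) →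
      framePotential d N p X ≤ framePotential d N p Y) :
    Submodule.span ℝ (Set.range X) = ⊤ := by
  by_contra hs
  have hbot : (Submodule.span ℝ (Set.range X))ᗮ ≠ ⊥ := by
    intro h
    exact hs ((Submodule.orthogonal_eq_bot_iff).1 h)
  obtain ⟨v, hv, hv0⟩ := Submodule.exists_mem_ne_zero_of_ne_bot hbot
  have hvX : ∀ i, ⟪X i, v⟫ = 0 := fun i =>
    (Submodule.mem_orthogonal _ v).1 hv (X i) (Submodule.subset_span ⟨i, rfl⟩)
  obtain ⟨u, hu, huX⟩ : ∃ u : EuclideanSpace ℝ (Fin d), ‖u‖ = 1 ∧ ∀ i, ⟪X i, u⟫ = 0 := by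
    refine ⟨(‖v‖⁻¹ : ℝ) • v, ?_, fun i => by rw [inner_smul_right, hvX, mul_zero]⟩
    rw [norm_smul, norm_inv, norm_norm, inv_mul_cancel₀ (norm_ne_zero_iff.2 hv0)]
  have huX' : ∀ i, ⟪u, X i⟫ = 0 := fun i => by rw [real_inner_comm]; exact huX i
  by_cases ho : ∀ k l, k ≠ l → ⟪X k, X l⟫ = 0
  · have hon : Orthonormal ℝ X := ⟨hX, fun k l h => ho k l h⟩
    have hli := hon.linearIndependent
    have hle := hli.fintype_card_le_finrank
    apply hs
    apply hli.span_eq_top_of_card_eq_finrank'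
    rw [finrank_euclideanSpace, Fintype.card_fin, Fintype.card_fin] at *
    omega
  · push Not at ho
    obtain ⟨k, l, hkl, hne⟩ := ho
    have hY : ∀ i, ‖Function.update X k u i‖ = 1 := by
      intro i
      by_cases h : i = k
      · subst h; simpa using hu
      · simpa [Function.update_of_ne h] using hX i
    have h0 : ∀ a b, a ≠ b → (a = k ∨ b = k) →
        ⟪Function.update X k u a, Function.update X k u b⟫ = 0 := by
      rintro a b hab (rfl | rfl)
      · rw [Function.update_self, Function.update_of_ne hab.symm]; exact huX' b
      · rw [Function.update_self, Function.update_of_ne hab]; exact huX a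
    have hterm : ∀ a b, (if a ≠ b then
        |⟪Function.update X k u a, Function.update X k u b⟫| ^ p else 0) ≤
        (if a ≠ b then |⟪X a, X b⟫| ^ p else 0) := by
      intro a b
      split_ifs with hab
      · by_cases h : a = k ∨ b = k
        · rw [h0 a b hab h, abs_zero, Real.zero_rpow hp.ne']
          positivity
        · push Not at h
          rw [Function.update_of_ne h.1, Function.update_of_ne h.2]
      · exact le_rfl
    have hlt : framePotential d N p (Function.update X k u) < framePotential d N p X := by
      unfold framePotential
      refine Finset.sum_lt_sum (fun a _ => Finset.sum_le_sum fun b _ => hterm a b)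
        ⟨k, Finset.mem_univ _, Finset.sum_lt_sum (fun b _ => hterm k b)
          ⟨l, Finset.mem_univ _, ?_⟩⟩
      rw [if_pos hkl, if_pos hkl, h0 k l hkl (Or.inl rfl), abs_zero, Real.zero_rpow hp.ne']
      exact Real.rpow_pos_of_pos (abs_pos.2 hne) p
    exact absurd (hmin _ hY) (not_le.2 hlt)
end

section
/- Let d, N ≥ 2 with N ≥ d. If X* ∈ S(N,d) attains the minimum F_{∞,N,d} of the coherence c(X) = max_{k≠ℓ} |⟨x_k,x_ℓ⟩| over S(N,d), then the vectors of X* span ℝ^d (i.e., X* is a frame for ℝ^d). -/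
open scoped RealInnerProductSpace
open Real

/-- The coherence of an `N`-tuple of vectors in `ℝ^d`:
`c(X) = max_{k≠ℓ} |⟨x_k,x_ℓ⟩|`. -/
noncomputable def coherence (d N : ℕ) (X : Fin N → EuclideanSpace ℝ (Fin d)) : ℝ :=
  sSup {v | ∃ k l : Fin N, k ≠ l ∧ v = |⟪X k, X l⟫|}

lemma coh_finite (d N : ℕ) (X : Fin N → EuclideanSpace ℝ (Fin d)) :
    Set.Finite {v : ℝ | ∃ k l : Fin N, k ≠ l ∧ v = |⟪X k, X l⟫|} := by
  refine (Set.finite_range (fun p : Fin N × Fin N => |⟪X p.1, X p.2⟫|)).subset ?_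
  rintro v ⟨k, l, -, rfl⟩
  exact ⟨(k, l), rfl⟩

lemma coh_le (d N : ℕ) (X : Fin N → EuclideanSpace ℝ (Fin d)) (k l : Fin N) (h : k ≠ l) :
    |⟪X k, X l⟫| ≤ coherence d N X :=
  le_csSup (coh_finite d N X).bddAbove ⟨k, l, h, rfl⟩

lemma coh_mem (d N : ℕ) (hN : 2 ≤ N) (X : Fin N → EuclideanSpace ℝ (Fin d)) :
    ∃ k l : Fin N, k ≠ l ∧ coherence d N X = |⟪X k, X l⟫| := by
  have hne : Set.Nonempty {v : ℝ | ∃ k l : Fin N, k ≠ l ∧ v = |⟪X k, X l⟫|} :=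
    ⟨_, ⟨0, by omega⟩, ⟨1, by omega⟩, by simp, rfl⟩
  exact hne.csSup_mem (coh_finite d N X)

/-- Any minimizer of the coherence over `S(N,d)` spans `ℝ^d`,
i.e. it is a frame for `ℝ^d`. -/
theorem minimizer_of_coherence_is_frame
    (d N : ℕ) (hd : 2 ≤ d) (hN : 2 ≤ N) (hdN : d ≤ N)
    (X : Fin N → EuclideanSpace ℝ (Fin d)) (hX : ∀ i, ‖X i‖ = 1)
    (hmin : ∀ Y : Fin N → EuclideanSpace ℝ (Fin d), (∀ i, ‖Y i‖ = 1) →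
      coherence d N X ≤ coherence d N Y) :
    Submodule.span ℝ (Set.range X) = ⊤ := by
  by_contra hspan
  set μ := coherence d N X with hμ
  have hle : ∀ k l, k ≠ l → |⟪X k, X l⟫| ≤ μ := coh_le d N X
  obtain ⟨k0, l0, hkl0, hμ0⟩ := coh_mem d N hN X
  have hμnn : 0 ≤ μ := by rw [hμ, hμ0]; exact abs_nonneg _
  have hμ1 : μ ≤ 1 := by
    rw [hμ, hμ0]
    have := abs_real_inner_le_norm (X k0) (X l0)
    simpa [hX] using this
  rcases hμnn.eq_or_lt with h0 | hpos
  · have hon : Orthonormal ℝ X := by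
      refine ⟨hX, fun k l hkl => ?_⟩
      have := hle k l hkl
      rw [← h0] at this
      exact abs_nonpos_iff.1 this
    apply hspan
    apply Submodule.eq_top_of_finrank_eq
    apply le_antisymm (Submodule.finrank_le _)
    rw [finrank_span_eq_card hon.linearIndependent]
    simpa using hdN
  · have hne : (Submodule.span ℝ (Set.range X))ᗮ ≠ ⊥ := by
      rwa [Ne, Submodule.orthogonal_eq_bot_iff]
    obtain ⟨e0, he0, hne0⟩ := Submodule.exists_mem_ne_zero_of_ne_bot hne
    obtain ⟨e, hee, heX⟩ : ∃ e : EuclideanSpace ℝ (Fin d), ‖e‖ = 1 ∧ ∀ k, ⟪X k, e⟫ = 0 := by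
      refine ⟨(‖e0‖⁻¹ : ℝ) • e0, norm_smul_inv_norm (𝕜 := ℝ) hne0, fun k => ?_⟩
      rw [inner_smul_right, (Submodule.mem_orthogonal _ _).1 he0 _
        (Submodule.subset_span ⟨k, rfl⟩), mul_zero]
    have heX' : ∀ k, ⟪e, X k⟫ = 0 := fun k => by rw [real_inner_comm, heX]
    have hee' : ⟪e, e⟫ = 1 := by rw [real_inner_self_eq_norm_sq, hee]; norm_num
    have hXX : ∀ k, ⟪X k, X k⟫ = 1 := fun k => by
      rw [real_inner_self_eq_norm_sq, hX]; norm_num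
    obtain ⟨q, hq⟩ : ∃ q : ℝ, q = μ / 4 := ⟨_, rfl⟩
    have hq0 : 0 < q := by linarith
    have hq1 : q ≤ 1 := by linarith
    let s : Fin N → ℝ := fun k => q ^ (k : ℕ)
    let c : Fin N → ℝ := fun k => √(1 - s k ^ 2)
    have hs0 : ∀ k, 0 < s k := fun k => pow_pos hq0 _
    have hs1 : ∀ k, s k ≤ 1 := fun k => pow_le_one₀ hq0.le hq1
    have hc0 : ∀ k, 0 ≤ c k := fun k => Real.sqrt_nonneg _
    have hcs : ∀ k, c k ^ 2 = 1 - s k ^ 2 := fun k =>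
      Real.sq_sqrt (by nlinarith [hs0 k, hs1 k])
    let Y : Fin N → EuclideanSpace ℝ (Fin d) := fun k => c k • X k + s k • e
    have hYY : ∀ k l, ⟪Y k, Y l⟫ = c k * c l * ⟪X k, X l⟫ + s k * s l := by
      intro k l
      simp only [Y, inner_add_left, inner_add_right, real_inner_smul_left, real_inner_smul_right,
        heX, heX', hee']
      ring
    have hY : ∀ k, ‖Y k‖ = 1 := by
      intro k
      have h := hYY k k
      rw [real_inner_self_eq_norm_sq, hXX] at h
      have h2 : ‖Y k‖ ^ 2 = 1 := by rw [h]; linarith [hcs k, sq (c k), sq (s k)]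
      nlinarith [norm_nonneg (Y k)]
    have key : ∀ k l : Fin N, k < l → |⟪Y k, Y l⟫| < μ := by
      intro k l hkl
      have hsl : s l ≤ q * s k := by
        have : s l ≤ q ^ ((k : ℕ) + 1) := pow_le_pow_of_le_one hq0.le hq1 hkl
        rw [pow_succ'] at this
        exact this
      have hcl : c l ≤ 1 := by nlinarith [hcs l, hc0 l, hs0 l]
      have hck : c k ≤ 1 - s k ^ 2 / 2 := by nlinarith [hcs k, hc0 k, hs0 k, sq_nonneg (c k - 1)]
      have h1 : |⟪Y k, Y l⟫| ≤ c k * c l * |⟪X k, X l⟫| + s k * s l := by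
        rw [hYY]
        refine (abs_add_le _ _).trans (le_of_eq ?_)
        rw [abs_mul, abs_of_nonneg (mul_nonneg (hc0 k) (hc0 l)),
          abs_of_pos (mul_pos (hs0 k) (hs0 l))]
      have h2 : c k * c l * |⟪X k, X l⟫| ≤ (1 - s k ^ 2 / 2) * μ := by
        have h3 : c k * c l ≤ 1 - s k ^ 2 / 2 :=
          (mul_le_of_le_one_right (hc0 k) hcl).trans hck
        exact mul_le_mul h3 (hle k l hkl.ne) (abs_nonneg _) ((hc0 k).trans hck)
      have h4 : s k * s l ≤ s k * (q * s k) := mul_le_mul_of_nonneg_left hsl (hs0 k).le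
      have h5 : 0 < s k ^ 2 * μ := mul_pos (pow_pos (hs0 k) 2) hpos
      rw [hq] at h4
      nlinarith
    obtain ⟨k, l, hkl, hk⟩ := coh_mem d N hN Y
    have hm := hmin Y hY
    rw [hk] at hm
    rcases lt_or_gt_of_ne hkl with h | h
    · linarith [key k l h]
    · rw [real_inner_comm] at hm
      linarith [key l k h]
end

section
/- Fix an integer d ≥ 2 and p ∈ (0,∞). The sequence N ↦ F_{p,N,d} / (N(N−1)), defined for N ≥ d+1, is non-decreasing: for every N ≥ d+2, F_{p,N−1,d} / ((N−1)(N−2)) ≤ F_{p,N,d} / (N(N−1)). -/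
open scoped RealInnerProductSpace
open Real

/-- `F_{p,N,d}`, the minimum of the `p`-frame potential over `S(N,d)`. -/
noncomputable def minFramePotential (d N : ℕ) (p : ℝ) : ℝ :=
  sInf (framePotential d N p '' {X | ∀ i, ‖X i‖ = 1})

theorem sum_delete_aux (M : ℕ) (g : Fin (M + 1) → Fin (M + 1) → ℝ) (hg : ∀ i, g i i = 0) :
    ∑ i : Fin (M + 1), ∑ k : Fin M, ∑ l : Fin M, g (i.succAbove k) (i.succAbove l) =
      ((M : ℝ) - 1) * ∑ k, ∑ l, g k l := by
  have h : ∀ i : Fin (M + 1), ∑ k : Fin M, ∑ l : Fin M, g (i.succAbove k) (i.succAbove l) =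
      (∑ k, ∑ l, g k l) - (∑ l, g i l) - ∑ k, g k i := by
    intro i
    have h1 : ∀ k, ∑ l : Fin M, g k (i.succAbove l) = (∑ l, g k l) - g k i := by
      intro k
      rw [Fin.sum_univ_succAbove (fun l => g k l) i]
      ring
    simp only [h1, Finset.sum_sub_distrib]
    rw [Fin.sum_univ_succAbove (fun k => ∑ l, g k l) i, Fin.sum_univ_succAbove (fun k => g k i) i,
      hg]
    ring
  simp only [h, Finset.sum_sub_distrib]
  rw [Finset.sum_comm (f := fun i k => g k i)]
  simp only [Finset.sum_const, Finset.card_univ, Fintype.card_fin, nsmul_eq_mul]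
  push_cast
  ring

theorem framePotential_nonneg_aux (d N : ℕ) (p : ℝ) (X : Fin N → EuclideanSpace ℝ (Fin d)) :
    0 ≤ framePotential d N p X := by
  unfold framePotential
  refine Finset.sum_nonneg fun k _ => Finset.sum_nonneg fun l _ => ?_
  split_ifs <;> positivity

theorem minFramePotential_le_aux (d N : ℕ) (p : ℝ) (X : Fin N → EuclideanSpace ℝ (Fin d))
    (hX : ∀ i, ‖X i‖ = 1) : minFramePotential d N p ≤ framePotential d N p X := by
  refine csInf_le ⟨0, ?_⟩ ⟨X, hX, rfl⟩
  rintro _ ⟨Y, _, rfl⟩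
  exact framePotential_nonneg_aux d N p Y

/-- The sequence `N ↦ F_{p,N,d}/(N(N−1))` is non-decreasing for `N ≥ d+1`. -/
theorem minFramePotential_div_monotone
    (d : ℕ) (hd : 2 ≤ d) (p : ℝ) (hp : 0 < p) (N : ℕ) (hN : d + 2 ≤ N) :
    minFramePotential d (N - 1) p / (((N : ℝ) - 1) * ((N : ℝ) - 2)) ≤
      minFramePotential d N p / ((N : ℝ) * ((N : ℝ) - 1)) := by
  obtain ⟨M, rfl⟩ : ∃ M, N = M + 1 := ⟨N - 1, by omega⟩
  have hM : (3 : ℝ) ≤ M := by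
    have : 3 ≤ M := by omega
    exact_mod_cast this
  have key : ((M : ℝ) + 1) / ((M : ℝ) - 1) * minFramePotential d M p ≤
      minFramePotential d (M + 1) p := by
    refine le_csInf ?_ ?_
    · exact ⟨_, fun _ => EuclideanSpace.single ⟨0, by omega⟩ 1, fun i => by simp, rfl⟩
    · rintro _ ⟨X, hX, rfl⟩
      have h1 := sum_delete_aux M
        (fun k l => if k ≠ l then |⟪X k, X l⟫| ^ p else 0) (by simp)
      have h2 : ∑ i : Fin (M + 1), minFramePotential d M p ≤
          ∑ i : Fin (M + 1), framePotential d M p (fun k => X (i.succAbove k)) :=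
        Finset.sum_le_sum fun i _ => minFramePotential_le_aux d M p _ fun k => hX _
      have h3 : ∑ i : Fin (M + 1), framePotential d M p (fun k => X (i.succAbove k)) =
          ((M : ℝ) - 1) * framePotential d (M + 1) p X := by
        unfold framePotential
        rw [← h1]
        simp only [ne_eq, Fin.succAbove_right_inj]
      rw [h3] at h2
      simp only [Finset.sum_const, Finset.card_univ, Fintype.card_fin, nsmul_eq_mul] at h2
      push_cast at h2
      rw [div_mul_eq_mul_div, div_le_iff₀ (by linarith)]
      linarith
  have e : minFramePotential d (M + 1 - 1) p = minFramePotential d M p := rfl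
  rw [e]
  push_cast
  have a : (0 : ℝ) < M - 1 := by linarith
  have b : (0 : ℝ) < M := by linarith
  rw [div_mul_eq_mul_div, div_le_iff₀ a] at key
  rw [div_le_div_iff₀ (by nlinarith) (by nlinarith)]
  have := mul_le_mul_of_nonneg_left key b.le
  linarith
end

section
/- Fix an integer d ≥ 2 and p ∈ (0,2]. Then lim_{N→∞} F_{p,N,d}/N² = 1/d; in particular P_{p,d} = 1/d. -/
open scoped RealInnerProductSpace
open Real MeasureTheory

/-- The probabilistic `p`-frame potential of a measure `μ` on the unit sphere `S^{d-1}`: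
`PFP_{p,d}(μ) = ∫∫ |⟨x,y⟩|^p dμ(x)dμ(y)`. -/
noncomputable def probFramePotential (d : ℕ) (p : ℝ)
    (μ : Measure (Metric.sphere (0 : EuclideanSpace ℝ (Fin d)) 1)) : ℝ :=
  ∫ x, ∫ y, |⟪(x : EuclideanSpace ℝ (Fin d)), (y : EuclideanSpace ℝ (Fin d))⟫| ^ p ∂μ ∂μ

/-- `P_{p,d}`, the minimum of the probabilistic `p`-frame potential over all Borel
probability measures on the unit sphere `S^{d-1}`. -/
noncomputable def minProbFramePotential (d : ℕ) (p : ℝ) : ℝ :=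
  sInf {v | ∃ μ : Measure (Metric.sphere (0 : EuclideanSpace ℝ (Fin d)) 1),
    IsProbabilityMeasure μ ∧ v = probFramePotential d p μ}

lemma abs_rpow_ge_sq {t p : ℝ} (ht : |t| ≤ 1) (hp : 0 < p) (hp2 : p ≤ 2) : t ^ 2 ≤ |t| ^ p := by
  rcases eq_or_ne t 0 with h | h
  · subst h
    simp [Real.zero_rpow hp.ne']
  · have h0 : 0 < |t| := abs_pos.mpr h
    have := Real.rpow_le_rpow_of_exponent_ge h0 ht hp2
    have h2 : |t| ^ (2:ℝ) = t ^ 2 := by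
      rw [show (2:ℝ) = ((2:ℕ):ℝ) by norm_num, Real.rpow_natCast, sq_abs]
    linarith

lemma inner_coord {d : ℕ} (x y : EuclideanSpace ℝ (Fin d)) : ⟪x, y⟫ = ∑ i, x i * y i := by
  simp [PiLp.inner_apply, mul_comm]

lemma inner_sq_coord {d : ℕ} (x y : EuclideanSpace ℝ (Fin d)) :
    ⟪x, y⟫ ^ 2 = ∑ i, ∑ j, (x i * x j) * (y i * y j) := by
  rw [inner_coord, sq, Finset.sum_mul_sum]
  refine Finset.sum_congr rfl fun i _ => Finset.sum_congr rfl fun j _ => by ring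

lemma abs_inner_le_one {d : ℕ} {x y : EuclideanSpace ℝ (Fin d)} (hx : ‖x‖ = 1) (hy : ‖y‖ = 1) :
    |⟪x, y⟫| ≤ 1 := by
  have := abs_real_inner_le_norm x y
  simpa [hx, hy] using this

lemma norm_coord {d : ℕ} {x : EuclideanSpace ℝ (Fin d)} (hx : ‖x‖ = 1) :
    ∑ i, x i * x i = 1 := by
  rw [← inner_coord, real_inner_self_eq_norm_sq, hx]; norm_num

lemma welch_aux {d : ℕ} (hd : 0 < d) (A : Fin d → Fin d → ℝ) (T : ℝ) (h : ∑ i, A i i = T) :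
    T ^ 2 / d ≤ ∑ i, ∑ j, A i j * A i j := by
  have h1 : (∑ i, A i i) ^ 2 ≤ (d:ℝ) * ∑ i, (A i i) ^ 2 := by
    simpa using sq_sum_le_card_mul_sum_sq (s := Finset.univ) (f := fun i => A i i)
  have h2 : ∑ i, (A i i) ^ 2 ≤ ∑ i, ∑ j, A i j * A i j := by
    refine Finset.sum_le_sum fun i _ => ?_
    rw [sq]
    exact Finset.single_le_sum (f := fun j => A i j * A i j)
      (fun j _ => mul_self_nonneg _) (Finset.mem_univ i)
  have hd' : (0:ℝ) < d := by exact_mod_cast hd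
  rw [div_le_iff₀ hd', ← h]
  nlinarith

lemma finite_lower {d N : ℕ} (hd : 0 < d) {p : ℝ} (hp : 0 < p) (hp2 : p ≤ 2)
    (X : Fin N → EuclideanSpace ℝ (Fin d)) (hX : ∀ i, ‖X i‖ = 1) :
    (N:ℝ) ^ 2 / d - N ≤ framePotential d N p X := by
  have h1 : (N:ℝ) ^ 2 / d ≤ ∑ k, ∑ l, ⟪X k, X l⟫ ^ 2 := by
    have := welch_aux hd (fun i j => ∑ k, X k i * X k j) N (by
      rw [Finset.sum_comm]
      simp [norm_coord (hX _)])
    refine this.trans (le_of_eq ?_)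
    simp_rw [inner_sq_coord, Finset.sum_mul_sum]
    symm
    calc ∑ k, ∑ l, ∑ i, ∑ j, X k i * X k j * (X l i * X l j)
        = ∑ k, ∑ i, ∑ l, ∑ j, X k i * X k j * (X l i * X l j) :=
          Finset.sum_congr rfl fun k _ => Finset.sum_comm
      _ = ∑ i, ∑ k, ∑ l, ∑ j, X k i * X k j * (X l i * X l j) := Finset.sum_comm
      _ = ∑ i, ∑ k, ∑ j, ∑ l, X k i * X k j * (X l i * X l j) :=
          Finset.sum_congr rfl fun i _ => Finset.sum_congr rfl fun k _ => Finset.sum_comm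
      _ = ∑ i, ∑ j, ∑ k, ∑ l, X k i * X k j * (X l i * X l j) :=
          Finset.sum_congr rfl fun i _ => Finset.sum_comm
  have h2 : ∑ k, ∑ l, ⟪X k, X l⟫ ^ 2 ≤ framePotential d N p X + N := by
    have : (N:ℝ) = ∑ k : Fin N, ∑ l : Fin N, if k = l then (1:ℝ) else 0 := by simp
    rw [this, framePotential, ← Finset.sum_add_distrib]
    refine Finset.sum_le_sum fun k _ => ?_
    rw [← Finset.sum_add_distrib]
    refine Finset.sum_le_sum fun l _ => ?_
    by_cases h : k = l
    · subst h
      simp [hX]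
    · simp only [h, ne_eq, not_false_eq_true, if_true, if_false, add_zero]
      exact abs_rpow_ge_sq (abs_inner_le_one (hX _) (hX _)) hp hp2
  linarith

lemma inner_basis {d : ℕ} (p : ℝ) (hp : 0 < p) (i j : Fin d) :
    |⟪(EuclideanSpace.single i (1:ℝ)), (EuclideanSpace.single j (1:ℝ))⟫| ^ p
      = if i = j then 1 else 0 := by
  by_cases h : i = j
  · subst h; simp
  · have h0 : ⟪(EuclideanSpace.single i (1:ℝ)), (EuclideanSpace.single j (1:ℝ))⟫ = 0 := by
      rw [inner_coord]
      refine Finset.sum_eq_zero fun k _ => ?_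
      by_cases hk : k = i
      · subst hk; simp [h]
      · simp [hk]
    rw [h0]
    simp [h, Real.zero_rpow hp.ne']

lemma finite_upper {d N : ℕ} (hd : 0 < d) {p : ℝ} (hp : 0 < p) :
    ∃ X : Fin N → EuclideanSpace ℝ (Fin d), (∀ i, ‖X i‖ = 1) ∧
      framePotential d N p X ≤ (N:ℝ) ^ 2 / d + N := by
  refine ⟨fun k => EuclideanSpace.single ⟨k.1 % d, Nat.mod_lt _ hd⟩ 1, by simp, ?_⟩
  have key : ∀ k : Fin N, (∑ l : Fin N, if k.1 % d = l.1 % d then (1:ℝ) else 0) ≤ N / d + 1 := by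
    intro k
    rw [Fin.sum_univ_eq_sum_range (fun l => if k.1 % d = l % d then (1:ℝ) else 0) N,
      Finset.sum_boole]
    have h := Nat.count_modEq_card N hd k.1
    rw [Nat.count_eq_card_filter_range] at h
    have h' : (Finset.filter (fun l => k.1 % d = l % d) (Finset.range N)).card ≤ N / d + 1 := by
      have : (Finset.filter (fun l => k.1 % d = l % d) (Finset.range N))
          = Finset.filter (fun l => l ≡ k.1 [MOD d]) (Finset.range N) := by
        refine Finset.filter_congr fun l _ => ?_
        exact eq_comm
      rw [this, h]
      split_ifs <;> omega
    have h3 : (((N / d : ℕ)) : ℝ) ≤ N / d := Nat.cast_div_le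
    have h4 : (((Finset.filter (fun l => k.1 % d = l % d) (Finset.range N)).card : ℕ) : ℝ)
      ≤ ((N / d : ℕ) : ℝ) + 1 := by exact_mod_cast h'
    linarith
  have : (N:ℝ) ^ 2 / d + N = ∑ k : Fin N, ((N:ℝ) / d + 1) := by simp; ring
  rw [this, framePotential]
  refine Finset.sum_le_sum fun k _ => le_trans (Finset.sum_le_sum fun l _ => ?_) (key k)
  rw [inner_basis p hp]
  simp only [Fin.mk.injEq]
  split_ifs <;> norm_num

lemma prob_lower {d : ℕ} (hd : 0 < d) {p : ℝ} (hp : 0 < p) (hp2 : p ≤ 2)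
    (μ : Measure (Metric.sphere (0 : EuclideanSpace ℝ (Fin d)) 1)) [IsProbabilityMeasure μ] :
    1 / (d:ℝ) ≤ probFramePotential d p μ := by
  have hn : ∀ x : Metric.sphere (0 : EuclideanSpace ℝ (Fin d)) 1,
      ‖(x : EuclideanSpace ℝ (Fin d))‖ = 1 := fun x => by simp
  have hI : ∀ f : Metric.sphere (0 : EuclideanSpace ℝ (Fin d)) 1 → ℝ, Continuous f →
      Integrable f μ := fun f hf =>
    hf.integrable_of_hasCompactSupport (HasCompactSupport.of_compactSpace f)
  have hI2 : ∀ f : (Metric.sphere (0 : EuclideanSpace ℝ (Fin d)) 1) ×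
      (Metric.sphere (0 : EuclideanSpace ℝ (Fin d)) 1) → ℝ, Continuous f →
      Integrable f (μ.prod μ) := fun f hf =>
    hf.integrable_of_hasCompactSupport (HasCompactSupport.of_compactSpace f)
  have hc : Continuous (fun z : (Metric.sphere (0 : EuclideanSpace ℝ (Fin d)) 1) ×
      (Metric.sphere (0 : EuclideanSpace ℝ (Fin d)) 1) =>
      ⟪(z.1 : EuclideanSpace ℝ (Fin d)), (z.2 : EuclideanSpace ℝ (Fin d))⟫) := by fun_prop
  have hcp := hc.abs.rpow_const (p := p) (fun _ => Or.inr hp.le)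
  have hco : ∀ i : Fin d, Continuous (fun x : Metric.sphere (0 : EuclideanSpace ℝ (Fin d)) 1 =>
      (x : EuclideanSpace ℝ (Fin d)) i) := fun i => by fun_prop
  have h1 : ∫ x, ∫ y, ⟪(x : EuclideanSpace ℝ (Fin d)), (y : EuclideanSpace ℝ (Fin d))⟫ ^ 2 ∂μ ∂μ
      ≤ probFramePotential d p μ := by
    refine integral_mono (hI2 _ (hc.pow 2)).integral_prod_left
      (hI2 _ hcp).integral_prod_left fun x => ?_
    refine integral_mono (hI _ ?_) (hI _ ?_) fun y => ?_
    · exact (hc.pow 2).comp (Continuous.prodMk_right x)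
    · exact hcp.comp (Continuous.prodMk_right x)
    · exact abs_rpow_ge_sq (abs_inner_le_one (hn _) (hn _)) hp hp2
  refine le_trans ?_ h1
  have h2 := welch_aux hd (fun i j => ∫ x, (x : EuclideanSpace ℝ (Fin d)) i *
    (x : EuclideanSpace ℝ (Fin d)) j ∂μ) 1 (by
      rw [← integral_finsetSum _ fun i _ => hI (fun x => (x : EuclideanSpace ℝ (Fin d)) i *
        (x : EuclideanSpace ℝ (Fin d)) i) ((hco i).mul (hco i))]
      simp [norm_coord (hn _)])
  rw [one_pow] at h2
  refine h2.trans (le_of_eq ?_)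
  have h3 : ∀ x : Metric.sphere (0 : EuclideanSpace ℝ (Fin d)) 1,
      ∫ y, ⟪(x : EuclideanSpace ℝ (Fin d)), (y : EuclideanSpace ℝ (Fin d))⟫ ^ 2 ∂μ
      = ∑ i, ∑ j, ((x : EuclideanSpace ℝ (Fin d)) i * (x : EuclideanSpace ℝ (Fin d)) j) *
        ∫ y, (y : EuclideanSpace ℝ (Fin d)) i * (y : EuclideanSpace ℝ (Fin d)) j ∂μ := by
    intro x
    simp_rw [inner_sq_coord]
    rw [integral_finsetSum _ fun i _ => hI _ (by fun_prop)]
    refine Finset.sum_congr rfl fun i _ => ?_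
    rw [integral_finsetSum _ fun j _ => hI _ (by fun_prop)]
    refine Finset.sum_congr rfl fun j _ => ?_
    rw [integral_const_mul]
  simp_rw [h3]
  rw [integral_finsetSum _ fun i _ => hI _ (by fun_prop)]
  refine Finset.sum_congr rfl fun i _ => ?_
  rw [integral_finsetSum _ fun j _ => hI _ (by fun_prop)]
  refine Finset.sum_congr rfl fun j _ => ?_
  rw [integral_mul_const]

lemma prob_attained {d : ℕ} (hd : 0 < d) {p : ℝ} (hp : 0 < p) :
    ∃ μ : Measure (Metric.sphere (0 : EuclideanSpace ℝ (Fin d)) 1),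
    IsProbabilityMeasure μ ∧ 1 / (d:ℝ) = probFramePotential d p μ := by
  have hd0 : (d:ℝ) ≠ 0 := by exact_mod_cast hd.ne'
  let e : Fin d → Metric.sphere (0 : EuclideanSpace ℝ (Fin d)) 1 :=
    fun i => ⟨EuclideanSpace.single i 1, by simp⟩
  let μ : Measure (Metric.sphere (0 : EuclideanSpace ℝ (Fin d)) 1) :=
    (d : ENNReal)⁻¹ • ∑ i, Measure.dirac (e i)
  have hint : ∀ f : Metric.sphere (0 : EuclideanSpace ℝ (Fin d)) 1 → ℝ,
      ∫ x, f x ∂μ = (d:ℝ)⁻¹ * ∑ i, f (e i) := by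
    intro f
    simp only [μ]
    rw [integral_smul_measure, integral_finsetSum_measure]
    · simp
    · intro i _
      exact integrable_dirac (by simp)
  refine ⟨μ, ⟨?_⟩, ?_⟩
  · simp only [μ, Measure.smul_apply, Measure.finsetSum_apply, measure_univ]
    simp [ENNReal.inv_mul_cancel, hd.ne']
  · rw [probFramePotential]
    simp_rw [hint]
    simp only [e, inner_basis p hp]
    simp [hd0]

/-- For `p ∈ (0,2]`, `lim_{N→∞} F_{p,N,d}/N² = 1/d`; in particular `P_{p,d} = 1/d`. -/
theorem tendsto_minFramePotential_div_sq_of_le_two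
    (d : ℕ) (hd : 2 ≤ d) (p : ℝ) (hp : 0 < p) (hp2 : p ≤ 2) :
    Filter.Tendsto (fun N : ℕ => minFramePotential d N p / (N : ℝ) ^ 2)
      Filter.atTop (nhds (1 / (d : ℝ))) ∧
    minProbFramePotential d p = 1 / (d : ℝ) := by
  have hd0 : 0 < d := by omega
  constructor
  · have hbdd : ∀ N, BddBelow (framePotential d N p '' {X | ∀ i, ‖X i‖ = 1}) := by
      rintro N
      refine ⟨(N:ℝ) ^ 2 / d - N, ?_⟩
      rintro _ ⟨X, hX, rfl⟩
      exact finite_lower hd0 hp hp2 X hX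
    have hlow : ∀ N : ℕ, (N:ℝ) ^ 2 / d - N ≤ minFramePotential d N p := by
      intro N
      obtain ⟨X, hX, -⟩ := finite_upper (N := N) hd0 hp
      refine le_csInf ⟨_, X, hX, rfl⟩ ?_
      rintro _ ⟨X, hX, rfl⟩
      exact finite_lower hd0 hp hp2 X hX
    have hup : ∀ N : ℕ, minFramePotential d N p ≤ (N:ℝ) ^ 2 / d + N := by
      intro N
      obtain ⟨X, hX, h⟩ := finite_upper (N := N) hd0 hp
      exact (csInf_le (hbdd N) ⟨X, hX, rfl⟩).trans h
    have hinv : Filter.Tendsto (fun N : ℕ => (1:ℝ) / N) Filter.atTop (nhds 0) :=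
      tendsto_one_div_atTop_nhds_zero_nat
    have hl : Filter.Tendsto (fun N : ℕ => 1 / (d:ℝ) - (1:ℝ) / N) Filter.atTop
        (nhds (1 / (d:ℝ))) := by
      simpa using (tendsto_const_nhds (x := 1 / (d:ℝ))).sub hinv
    have hu : Filter.Tendsto (fun N : ℕ => 1 / (d:ℝ) + (1:ℝ) / N) Filter.atTop
        (nhds (1 / (d:ℝ))) := by
      simpa using (tendsto_const_nhds (x := 1 / (d:ℝ))).add hinv
    have hd1 : (d:ℝ) ≠ 0 := by exact_mod_cast hd0.ne'
    refine tendsto_of_tendsto_of_tendsto_of_le_of_le' hl hu ?_ ?_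
    · filter_upwards [Filter.eventually_gt_atTop 0] with N hN
      have hN' : (0:ℝ) < N := by exact_mod_cast hN
      rw [le_div_iff₀ (by positivity)]
      refine le_trans (le_of_eq ?_) (hlow N)
      field_simp
    · filter_upwards [Filter.eventually_gt_atTop 0] with N hN
      have hN' : (0:ℝ) < N := by exact_mod_cast hN
      rw [div_le_iff₀ (by positivity)]
      refine (hup N).trans (le_of_eq ?_)
      field_simp
  · apply le_antisymm
    · refine csInf_le ⟨1 / (d:ℝ), ?_⟩ (prob_attained hd0 hp)
      rintro _ ⟨μ, hμ, rfl⟩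
      exact prob_lower hd0 hp hp2 μ
    · refine le_csInf ⟨_, prob_attained hd0 hp⟩ ?_
      rintro _ ⟨μ, hμ, rfl⟩
      exact prob_lower hd0 hp hp2 μ
end

section
/- Let p ≥ 2 be an even integer and d = 2. Then lim_{N→∞} F_{p,N,2}/N² = P_{p,2} = (1·3·5⋯(p−1)) / (2·4·6⋯p). -/
open scoped RealInnerProductSpace
open Real MeasureTheory

open ComplexConjugate in
lemma aux_A (m : ℕ) (z w : ℂ) :
    ((((z * conj w).re) ^ (2 * m) : ℝ) : ℂ) =
      ∑ k ∈ Finset.range (2 * m + 1), (((2 * m).choose k : ℝ) / 4 ^ m : ℝ) *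
        (z ^ k * conj z ^ (2 * m - k)) * conj (w ^ k * conj w ^ (2 * m - k)) := by
  have h : (((z * conj w).re : ℝ) : ℂ) = (z * conj w + conj z * w) / 2 := by
    rw [Complex.re_eq_add_conj]; simp
  push_cast
  rw [h, div_pow, add_pow, pow_mul (2 : ℂ) 2 m, Finset.sum_div]
  refine Finset.sum_congr rfl fun k _ => ?_
  simp only [map_mul, map_pow, Complex.conj_conj, mul_pow]
  norm_num
  ring

open ComplexConjugate in
lemma aux_B {α : Type*} [MeasurableSpace α] (ν : Measure α) [IsFiniteMeasure ν] (m : ℕ)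
    (f : α → ℂ) (hf : Measurable f) (h1 : ∀ x, ‖f x‖ = 1) :
    ∫ x, ∫ y, ((f x * conj (f y)).re) ^ (2 * m) ∂ν ∂ν =
      ∑ k ∈ Finset.range (2 * m + 1), (((2 * m).choose k : ℝ) / 4 ^ m : ℝ) *
        ‖∫ x, f x ^ k * conj (f x) ^ (2 * m - k) ∂ν‖ ^ 2 := by
  have hint : ∀ k, Integrable (fun x => f x ^ k * conj (f x) ^ (2 * m - k)) ν := by
    intro k
    refine Integrable.of_bound (C := 1) ?_ (Filter.Eventually.of_forall fun x => ?_)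
    · have : Measurable (fun x => conj (f x)) := Complex.continuous_conj.measurable.comp hf
      exact ((hf.pow_const _).mul (this.pow_const _)).aestronglyMeasurable
    · simp [h1]
  have hintc : ∀ k, Integrable (fun x => conj (f x ^ k * conj (f x) ^ (2 * m - k))) ν := by
    intro k
    exact (Complex.conjCLE.toContinuousLinearMap).integrable_comp (hint k)
  have key : ((∫ x, ∫ y, ((f x * conj (f y)).re) ^ (2 * m) ∂ν ∂ν : ℝ) : ℂ) =
     ((∑ k ∈ Finset.range (2 * m + 1), (((2 * m).choose k : ℝ) / 4 ^ m : ℝ) *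
        ‖∫ x, f x ^ k * conj (f x) ^ (2 * m - k) ∂ν‖ ^ 2 : ℝ) : ℂ) := by
    rw [← integral_complex_ofReal]
    simp_rw [← integral_complex_ofReal, aux_A]
    have : ∀ x, ∫ y, ∑ k ∈ Finset.range (2 * m + 1), (((2 * m).choose k : ℝ) / 4 ^ m : ℝ) *
        (f x ^ k * conj (f x) ^ (2 * m - k)) * conj (f y ^ k * conj (f y) ^ (2 * m - k)) ∂ν
        = ∑ k ∈ Finset.range (2 * m + 1), (((2 * m).choose k : ℝ) / 4 ^ m : ℝ) *
        (f x ^ k * conj (f x) ^ (2 * m - k)) *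
          conj (∫ y, (f y ^ k * conj (f y) ^ (2 * m - k)) ∂ν) := by
      intro x
      rw [integral_finsetSum _ fun k _ => (hintc k).const_mul _]
      refine Finset.sum_congr rfl fun k _ => ?_
      rw [integral_const_mul, integral_conj]
    simp_rw [this]
    rw [integral_finsetSum _ fun k _ => ((hint k).const_mul _).mul_const _]
    push_cast
    refine Finset.sum_congr rfl fun k _ => ?_
    rw [integral_mul_const, integral_const_mul, mul_assoc, Complex.mul_conj, Complex.normSq_eq_norm_sq]
    push_cast
    rfl
  exact_mod_cast key

lemma aux_C (m : ℕ) : ((2 * m).choose m : ℝ) / 4 ^ m =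
    ∏ i ∈ Finset.range m, ((2 * (i : ℝ) + 1) / (2 * (i : ℝ) + 2)) := by
  induction m with
  | zero => simp
  | succ n ih =>
    rw [Finset.prod_range_succ, ← ih]
    have h := Nat.succ_mul_centralBinom_succ n
    simp only [Nat.centralBinom] at h
    have h' : ((n : ℝ) + 1) * ((2 * (n + 1)).choose (n + 1) : ℝ)
      = 2 * (2 * n + 1) * ((2 * n).choose n : ℝ) := by exact_mod_cast h
    have : (n : ℝ) + 1 ≠ 0 := by positivity
    rw [show (2 * (n : ℝ) + 2) = 2 * (n + 1) by ring]
    field_simp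
    rw [pow_succ]
    linear_combination (4 ^ n * 2) * h'

open ComplexConjugate in
lemma aux_lower {α : Type*} [MeasurableSpace α] (ν : Measure α) [IsFiniteMeasure ν] (m : ℕ)
    (f : α → ℂ) (hf : Measurable f) (h1 : ∀ x, ‖f x‖ = 1) :
    ((2 * m).choose m : ℝ) / 4 ^ m * ν.real Set.univ ^ 2 ≤
    ∫ x, ∫ y, ((f x * conj (f y)).re) ^ (2 * m) ∂ν ∂ν := by
  rw [aux_B ν m f hf h1]
  have := Finset.single_le_sum (s := Finset.range (2 * m + 1))
    (f := fun k => (((2 * m).choose k : ℝ) / 4 ^ m : ℝ) *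
        ‖∫ x, f x ^ k * conj (f x) ^ (2 * m - k) ∂ν‖ ^ 2) (fun k _ => by positivity)
    (a := m) (by simp; omega)
  refine le_trans (le_of_eq ?_) this
  have h2 : ∀ x, f x ^ m * conj (f x) ^ (2 * m - m) = 1 := by
    intro x
    rw [show 2 * m - m = m by omega, ← mul_pow, Complex.mul_conj, Complex.normSq_eq_norm_sq, h1]
    simp
  simp [h2]

open ComplexConjugate in
lemma aux_eq (m N : ℕ) (hN : 2 * m < N) (ζ : ℂ) (hζ : IsPrimitiveRoot ζ N) (h1 : ‖ζ‖ = 1) :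
    ∫ x : Fin N, ∫ y : Fin N, ((ζ ^ (x : ℕ) * conj (ζ ^ (y : ℕ))).re) ^ (2 * m)
      ∂Measure.count ∂Measure.count =
    ((2 * m).choose m : ℝ) / 4 ^ m * N ^ 2 := by
  rw [aux_B (Measure.count : Measure (Fin N)) m (fun x => ζ ^ (x : ℕ)) (measurable_of_finite _)
    (by simp [h1])]
  have hz : ζ * conj ζ = 1 := by
    rw [Complex.mul_conj, Complex.normSq_eq_norm_sq, h1]; simp
  have e : ∀ k, ∫ x : Fin N, (ζ ^ (x : ℕ)) ^ k * conj (ζ ^ (x : ℕ)) ^ (2 * m - k) ∂Measure.count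
      = ∑ i ∈ Finset.range N, (ζ ^ k * conj ζ ^ (2 * m - k)) ^ i := by
    intro k
    rw [integral_count, ← Fin.sum_univ_eq_sum_range]
    refine Finset.sum_congr rfl fun i _ => ?_
    simp only [map_pow]
    ring
  rw [Finset.sum_eq_single m]
  · rw [e, show 2 * m - m = m by omega, ← mul_pow, hz]
    simp
  · intro k hk hkm
    rw [Finset.mem_range] at hk
    rw [e]
    have hq1 : ζ ^ k * conj ζ ^ (2 * m - k) ≠ 1 := by
      intro h
      apply hkm
      have h3 : ζ ^ k = ζ ^ (2 * m - k) := by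
        calc ζ ^ k = ζ ^ k * (ζ * conj ζ) ^ (2 * m - k) := by rw [hz]; simp
          _ = (ζ ^ k * conj ζ ^ (2 * m - k)) * ζ ^ (2 * m - k) := by ring
          _ = _ := by rw [h, one_mul]
      have := hζ.pow_inj (by omega) (by omega) h3
      omega
    have hc : conj ζ ^ N = 1 := by rw [← map_pow, hζ.pow_eq_one, map_one]
    have hqN : (ζ ^ k * conj ζ ^ (2 * m - k)) ^ N = 1 := by
      rw [mul_pow, ← pow_mul, ← pow_mul, mul_comm k, mul_comm (2 * m - k), pow_mul, pow_mul,
        hζ.pow_eq_one, hc]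
      simp
    rw [geom_sum_eq hq1, hqN]
    simp
  · intro h; exact absurd (Finset.mem_range.2 (by omega)) h

noncomputable def toCC (x : EuclideanSpace ℝ (Fin 2)) : ℂ := ⟨x 0, x 1⟩

lemma toCC_norm (x : EuclideanSpace ℝ (Fin 2)) : ‖toCC x‖ = ‖x‖ := by
  rw [EuclideanSpace.norm_eq, Complex.norm_eq_sqrt_sq_add_sq]
  simp [toCC]

lemma toCC_meas : Measurable toCC := by
  have : Continuous toCC := by
    have : toCC = fun x => ((x 0 : ℝ) : ℂ) + (x 1 : ℝ) * Complex.I := by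
      funext x; apply Complex.ext <;> simp [toCC]
    rw [this]; fun_prop
  exact this.measurable

open ComplexConjugate in
lemma toCC_inner (m : ℕ) (x y : EuclideanSpace ℝ (Fin 2)) :
    |⟪x, y⟫| ^ ((2 * m : ℕ) : ℝ) = ((toCC x * conj (toCC y)).re) ^ (2 * m) := by
  rw [Real.rpow_natCast, Even.pow_abs (even_two_mul m)]
  congr 1
  simp [toCC, PiLp.inner_apply, Fin.sum_univ_two]
  ring

open ComplexConjugate in
lemma fp_eq (m N : ℕ) (X : Fin N → EuclideanSpace ℝ (Fin 2)) (hX : ∀ i, ‖X i‖ = 1) :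
    framePotential 2 N ((2 * m : ℕ) : ℝ) X =
    (∫ x : Fin N, ∫ y : Fin N, ((toCC (X x) * conj (toCC (X y))).re) ^ (2 * m)
      ∂Measure.count ∂Measure.count) - N := by
  simp_rw [integral_count, ← toCC_inner]
  unfold framePotential
  have : ∀ k : Fin N, (∑ l : Fin N, if k ≠ l then |⟪X k, X l⟫| ^ ((2 * m : ℕ) : ℝ) else 0)
      = (∑ l : Fin N, |⟪X k, X l⟫| ^ ((2 * m : ℕ) : ℝ)) - 1 := by
    intro k
    rw [eq_sub_iff_add_eq]
    have h1 : (1 : ℝ) = ∑ l : Fin N, if k = l then |⟪X k, X l⟫| ^ ((2 * m : ℕ) : ℝ) else 0 := by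
      rw [Finset.sum_ite_eq]
      simp [hX]
    rw [h1, ← Finset.sum_add_distrib]
    refine Finset.sum_congr rfl fun l _ => ?_
    by_cases h : k = l <;> simp [h]
  simp_rw [this]
  simp [Finset.sum_sub_distrib]

lemma exists_X (N : ℕ) (hN : N ≠ 0) : ∃ (ζ : ℂ) (X : Fin N → EuclideanSpace ℝ (Fin 2)),
    IsPrimitiveRoot ζ N ∧ ‖ζ‖ = 1 ∧ (∀ i, ‖X i‖ = 1) ∧ ∀ i, toCC (X i) = ζ ^ (i : ℕ) := by
  have hζ := Complex.isPrimitiveRoot_exp N hN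
  set ζ := Complex.exp (2 * π * Complex.I / N)
  have h1 : ‖ζ‖ = 1 := hζ.norm'_eq_one hN
  have h2 : ∀ i : Fin N, toCC (!₂[(ζ ^ (i : ℕ)).re, (ζ ^ (i : ℕ)).im]) = ζ ^ (i : ℕ) := by
    intro i; apply Complex.ext <;> simp [toCC]
  refine ⟨ζ, fun i => !₂[(ζ ^ (i : ℕ)).re, (ζ ^ (i : ℕ)).im], hζ, h1, ?_, h2⟩
  intro i
  rw [← toCC_norm, h2]
  simp [h1]

lemma minFP_eq (m N : ℕ) (hN : 2 * m < N) :
    minFramePotential 2 N ((2 * m : ℕ) : ℝ) = ((2 * m).choose m : ℝ) / 4 ^ m * N ^ 2 - N := by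
  apply IsLeast.csInf_eq
  constructor
  · obtain ⟨ζ, X, hζ, h1, hX, hX'⟩ := exists_X N (by omega)
    refine ⟨X, hX, ?_⟩
    rw [fp_eq m N X hX]
    simp_rw [hX']
    rw [aux_eq m N hN ζ hζ h1]
  · rintro _ ⟨X, hX, rfl⟩
    rw [fp_eq m N X hX]
    have := aux_lower (Measure.count : Measure (Fin N)) m (fun i => toCC (X i))
      (measurable_of_finite _) (fun i => by rw [toCC_norm, hX])
    simp [Measure.real] at this
    simpa using this

lemma minPFP_eq (m : ℕ) :
    minProbFramePotential 2 ((2 * m : ℕ) : ℝ) = ((2 * m).choose m : ℝ) / 4 ^ m := by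
  apply IsLeast.csInf_eq
  constructor
  · obtain ⟨ζ, X, hζ, h1, hX, hX'⟩ := exists_X (2 * m + 1) (by omega)
    let Y : Fin (2 * m + 1) → Metric.sphere (0 : EuclideanSpace ℝ (Fin 2)) 1 :=
      fun i => ⟨X i, by simp [hX]⟩
    have hY : Measurable Y := measurable_of_finite _
    let ν : Measure (Fin (2 * m + 1)) := ((2 * m + 1 : ℕ) : ENNReal)⁻¹ • Measure.count
    have hν : IsProbabilityMeasure ν := by
      constructor
      simp only [ν, Measure.smul_apply, Measure.count_univ, smul_eq_mul]
      simp only [ENat.card_eq_coe_fintype_card, Fintype.card_fin]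
      exact ENNReal.inv_mul_cancel (by simp) (ENNReal.natCast_ne_top _)
    refine ⟨ν.map Y, Measure.isProbabilityMeasure_map hY.aemeasurable, ?_⟩
    unfold probFramePotential
    have hc : Continuous (fun q : Metric.sphere (0 : EuclideanSpace ℝ (Fin 2)) 1 ×
        Metric.sphere (0 : EuclideanSpace ℝ (Fin 2)) 1 =>
        |⟪(q.1 : EuclideanSpace ℝ (Fin 2)), (q.2 : EuclideanSpace ℝ (Fin 2))⟫| ^ (2 * m)) := by
      fun_prop
    simp_rw [Real.rpow_natCast]
    rw [integral_map hY.aemeasurable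
      (hc.stronglyMeasurable.integral_prod_right').aestronglyMeasurable]
    have : ∀ x : Metric.sphere (0 : EuclideanSpace ℝ (Fin 2)) 1, 
       ∫ y, |⟪(x : EuclideanSpace ℝ (Fin 2)), (y : EuclideanSpace ℝ (Fin 2))⟫| ^ (2 * m) ∂(ν.map Y)
       = ∫ i, |⟪(x : EuclideanSpace ℝ (Fin 2)), X i⟫| ^ (2 * m) ∂ν := by
      intro x
      have hx : Continuous (fun y : Metric.sphere (0 : EuclideanSpace ℝ (Fin 2)) 1 =>
        |⟪(x : EuclideanSpace ℝ (Fin 2)), (y : EuclideanSpace ℝ (Fin 2))⟫| ^ (2 * m)) := by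
        fun_prop
      rw [integral_map hY.aemeasurable hx.aestronglyMeasurable]
    have hin := toCC_inner m
    simp_rw [Real.rpow_natCast] at hin
    simp_rw [this, hin]
    simp only [ν, integral_smul_measure]
    have e : ∀ x, toCC (Y x : EuclideanSpace ℝ (Fin 2)) = ζ ^ (x : ℕ) := hX'
    simp_rw [hX', e]
    rw [integral_smul, aux_eq m _ (by omega) ζ hζ h1]
    have : ((2 * m + 1 : ℕ) : ℝ) ≠ 0 := by positivity
    simp only [ENNReal.toReal_inv, ENNReal.toReal_natCast, smul_eq_mul]
    field_simp
  · rintro _ ⟨μ, hμ, rfl⟩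
    unfold probFramePotential
    simp_rw [toCC_inner]
    have := aux_lower μ m (fun x => toCC x) (toCC_meas.comp measurable_subtype_coe)
      (fun x => by rw [toCC_norm]; simp)
    simpa using this

/-- For `d = 2` and `p` an even integer,
`lim_{N→∞} F_{p,N,2}/N² = P_{p,2} = (1·3·5⋯(p−1))/(2·4·6⋯p)`. -/
theorem tendsto_minFramePotential_div_sq_even_dim_two
    (p : ℕ) (hp2 : 2 ≤ p) (hpe : Even p) :
    Filter.Tendsto (fun N : ℕ => minFramePotential 2 N (p : ℝ) / (N : ℝ) ^ 2)
      Filter.atTop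
      (nhds (∏ i ∈ Finset.range (p / 2), ((2 * (i : ℝ) + 1) / (2 * (i : ℝ) + 2)))) ∧
    minProbFramePotential 2 (p : ℝ) =
      ∏ i ∈ Finset.range (p / 2), ((2 * (i : ℝ) + 1) / (2 * (i : ℝ) + 2)) := by
  obtain ⟨m, rfl⟩ := hpe.two_dvd
  rw [Nat.mul_div_cancel_left m (by norm_num), ← aux_C]
  refine ⟨?_, minPFP_eq m⟩
  have h : Filter.Tendsto (fun N : ℕ => ((2 * m).choose m : ℝ) / 4 ^ m - 1 / (N : ℝ))
      Filter.atTop (nhds (((2 * m).choose m : ℝ) / 4 ^ m - 0)) :=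
    tendsto_const_nhds.sub tendsto_one_div_atTop_nhds_zero_nat
  rw [sub_zero] at h
  refine h.congr' ?_
  filter_upwards [Filter.eventually_gt_atTop (2 * m)] with N hN
  rw [minFP_eq m N hN]
  have : (N : ℝ) ≠ 0 := by
    have : 0 < N := by omega
    positivity
  field_simp
end

section
/- Let p ≥ 2 be an even integer, d, N ≥ 2, and X = (x_1,…,x_N) ∈ S(N,d) with coherence c(X) = max_{k≠ℓ}|⟨x_k,x_ℓ⟩| < 1. Then FP_{p,N,d}(X) = (FP_{p,2N,d}(X^sym) − 2N)/4 ≥ N²·(1·3·5⋯(p−1)) / (d(d+2)⋯(d+p−2)) − N, and equality holds if and only if X^sym is a spherical p-design. -/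
open scoped RealInnerProductSpace
open Real MeasureTheory

/-- The normalized (uniform probability) surface measure on the unit sphere
`S^{d-1} ⊂ ℝ^d`. -/
noncomputable def sphereUniform (d : ℕ) :
    Measure (Metric.sphere (0 : EuclideanSpace ℝ (Fin d)) 1) :=
  (((volume : Measure (EuclideanSpace ℝ (Fin d))).toSphere) Set.univ)⁻¹ •
    ((volume : Measure (EuclideanSpace ℝ (Fin d))).toSphere)

/-- A tuple of `M` points of the unit sphere `S^{d-1}` is a spherical `t`-design if every
polynomial of degree at most `t` has the same average over the tuple as over the sphere. -/
def IsSphericalDesign (d t M : ℕ) (Y : Fin M → EuclideanSpace ℝ (Fin d)) : Prop :=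
  ∀ h : MvPolynomial (Fin d) ℝ, h.totalDegree ≤ t →
    ∫ x, MvPolynomial.eval (fun i => (x : EuclideanSpace ℝ (Fin d)) i) h ∂(sphereUniform d) =
      (1 / (M : ℝ)) * ∑ k : Fin M, MvPolynomial.eval (fun i => Y k i) h

lemma aux_radial (n q : ℕ) :
    ∫ r : Set.Ioi (0 : ℝ), (r : ℝ) ^ q * rexp (-(r : ℝ) ^ 2) ∂(Measure.volumeIoiPow n)
      = Real.Gamma (((n : ℝ) + 1 + q) / 2) / 2 := by
  simp only [Measure.volumeIoiPow, ENNReal.ofReal]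
  rw [integral_withDensity_eq_integral_smul (measurable_subtype_coe.pow_const _).real_toNNReal,
    integral_subtype_comap measurableSet_Ioi
      fun a : ℝ ↦ Real.toNNReal (a ^ n) • (a ^ q * rexp (-a ^ 2))]
  have h := integral_rpow_mul_exp_neg_rpow (p := 2) (q := (n : ℝ) + q) (by norm_num)
    (by have : (0 : ℝ) ≤ (n : ℝ) + q := by positivity
        linarith)
  rw [show ((n : ℝ) + 1 + q) = (n : ℝ) + q + 1 by ring]
  rw [show Real.Gamma (((n : ℝ) + q + 1) / 2) / 2 = 1 / 2 * Real.Gamma (((n : ℝ) + q + 1) / 2)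
    by ring, ← h]
  refine setIntegral_congr_fun measurableSet_Ioi fun x hx ↦ ?_
  have hx' : (0 : ℝ) < x := hx
  simp only [NNReal.smul_def, smul_eq_mul]
  rw [Real.coe_toNNReal _ (pow_nonneg hx'.le _), Real.rpow_add hx', Real.rpow_natCast,
    Real.rpow_natCast, Real.rpow_two]
  ring

lemma aux_polar (d : ℕ) (hd : 2 ≤ d) (q : ℕ) (f : EuclideanSpace ℝ (Fin d) → ℝ)
    (hf : ∀ r : ℝ, 0 < r → ∀ y, f (r • y) = r ^ q * f y) :
    ∫ y, f y * rexp (-‖y‖ ^ 2) =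
      (∫ s : Metric.sphere (0 : EuclideanSpace ℝ (Fin d)) 1, f s
        ∂((volume : Measure (EuclideanSpace ℝ (Fin d))).toSphere)) *
      (Real.Gamma (((d : ℝ) + q) / 2) / 2) := by
  have : Nonempty (Fin d) := ⟨⟨0, by omega⟩⟩
  have hr : ((d : ℝ) + q) = (((Module.finrank ℝ (EuclideanSpace ℝ (Fin d)) - 1 : ℕ) : ℝ) + 1 + q) := by
    simp only [finrank_euclideanSpace, Fintype.card_fin]
    rw [Nat.cast_sub (by omega)]; simp
  rw [hr, ← aux_radial, ← integral_prod_mul]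
  have h := (volume : Measure (EuclideanSpace ℝ (Fin d))).measurePreserving_homeomorphUnitSphereProd.integral_comp
        (Homeomorph.measurableEmbedding _)
        (fun z : Metric.sphere (0 : EuclideanSpace ℝ (Fin d)) 1 × Set.Ioi (0 : ℝ) =>
          f z.1 * ((z.2 : ℝ) ^ q * rexp (-(z.2 : ℝ) ^ 2)))
  rw [← h]
  have h3 := integral_subtype_comap (μ := (volume : Measure (EuclideanSpace ℝ (Fin d))))
    (measurableSet_singleton (0 : EuclideanSpace ℝ (Fin d))).compl
    (fun x : EuclideanSpace ℝ (Fin d) ↦ f x * rexp (-‖x‖ ^ 2))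
  rw [restrict_compl_singleton] at h3
  rw [← h3]
  congr 1
  ext x
  have hx : (0 : ℝ) < ‖x.1‖ := norm_pos_iff.2 x.2
  simp only [homeomorphUnitSphereProd_apply_snd_coe, homeomorphUnitSphereProd_apply_fst_coe]
  rw [hf _ (inv_pos.2 hx)]
  have : ‖x.1‖⁻¹ ^ q * ‖x.1‖ ^ q = 1 := by
    rw [← mul_pow, inv_mul_cancel₀ hx.ne', one_pow]
  linear_combination (- f x * rexp (-‖x.1‖ ^ 2)) * this

lemma aux_prob (d : ℕ) (hd : 2 ≤ d) : IsProbabilityMeasure (sphereUniform d) := by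
  have : Nonempty (Fin d) := ⟨⟨0, by omega⟩⟩
  constructor
  simp only [sphereUniform, Measure.smul_apply, smul_eq_mul]
  apply ENNReal.inv_mul_cancel
  · rw [Ne, Measure.measure_univ_eq_zero]
    exact Measure.toSphere_ne_zero _
  · exact measure_ne_top _ _

lemma aux_sphere (d : ℕ) (hd : 2 ≤ d) (q : ℕ) (f : EuclideanSpace ℝ (Fin d) → ℝ)
    (hf : ∀ r : ℝ, 0 < r → ∀ y, f (r • y) = r ^ q * f y) :
    (∫ y, f y * rexp (-‖y‖ ^ 2)) * Real.Gamma ((d : ℝ) / 2) =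
      (∫ s, f s ∂(sphereUniform d)) * Real.Gamma (((d : ℝ) + q) / 2) *
      ∫ y : EuclideanSpace ℝ (Fin d), rexp (-‖y‖ ^ 2) := by
  have : Nonempty (Fin d) := ⟨⟨0, by omega⟩⟩
  have h1 := aux_polar d hd q f hf
  have h2 := aux_polar d hd 0 (fun _ => 1) (by simp)
  simp only [one_mul, integral_const, smul_eq_mul, mul_one, Nat.cast_zero, add_zero] at h2
  rw [h1, h2, sphereUniform, integral_smul_measure, ENNReal.toReal_inv, ← Measure.real, smul_eq_mul]
  have : (volume : Measure (EuclideanSpace ℝ (Fin d))).toSphere.real Set.univ ≠ 0 := by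
    rw [Ne, measureReal_eq_zero_iff, Measure.measure_univ_eq_zero]
    exact Measure.toSphere_ne_zero _
  field_simp

lemma aux_gauss1 (q : ℕ) (hq : Even q) :
    ∫ t : ℝ, t ^ q * rexp (-t ^ 2) = Real.Gamma (((q : ℝ) + 1) / 2) := by
  have h := integral_rpow_mul_exp_neg_rpow (p := 2) (q := (q : ℝ)) (by norm_num)
    (by have : (0 : ℝ) ≤ (q : ℝ) := by positivity
        linarith)
  have h2 := integral_comp_abs (f := fun t : ℝ => t ^ q * rexp (-t ^ 2))
  simp only [hq.pow_abs, sq_abs] at h2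
  rw [h2]
  simp only [Real.rpow_natCast, Real.rpow_two] at h
  rw [h]; ring

lemma aux_gaussd (d : ℕ) (hd : 2 ≤ d) (q : ℕ) (hq : Even q) (x : EuclideanSpace ℝ (Fin d))
    (hx : ‖x‖ = 1) :
    ∫ y : EuclideanSpace ℝ (Fin d), ⟪x, y⟫ ^ q * rexp (-‖y‖ ^ 2) =
      Real.Gamma (((q : ℝ) + 1) / 2) * Real.Gamma (1 / 2) ^ (d - 1) := by
  let i0 : Fin d := ⟨0, by omega⟩
  obtain ⟨b, hb⟩ := Orthonormal.exists_orthonormalBasis_extension_of_card_eq (𝕜 := ℝ)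
    (E := EuclideanSpace ℝ (Fin d)) (ι := Fin d) (by simp) (v := fun _ => x) (s := {i0})
    (by
      rw [orthonormal_iff_ite]
      rintro ⟨i, hi⟩ ⟨j, hj⟩
      simp only [Set.mem_singleton_iff] at hi hj
      subst hi hj
      simp [hx])
  have hb0 : b i0 = x := hb i0 rfl
  rw [← b.measurePreserving_repr_symm.integral_comp
    (b.repr.symm.toHomeomorph.measurableEmbedding),
    ← (PiLp.volume_preserving_toLp (Fin d)).integral_comp
      (MeasurableEquiv.toLp 2 (Fin d → ℝ)).measurableEmbedding]
  have key : ∀ v : Fin d → ℝ, ⟪x, b.repr.symm (WithLp.toLp 2 v)⟫ ^ q *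
      rexp (-‖b.repr.symm (WithLp.toLp 2 v)‖ ^ 2) =
      ∏ i, (fun (i : Fin d) (t : ℝ) => t ^ (if i = i0 then q else 0) * rexp (-t ^ 2)) i (v i) := by
    intro v
    rw [← hb0, LinearIsometryEquiv.norm_map, EuclideanSpace.norm_sq_eq, Finset.prod_mul_distrib,
      ← Real.exp_sum, ← b.repr.inner_map_map]
    simp [EuclideanSpace.inner_single_left]
  simp only [key]
  rw [integral_fintype_prod_volume_eq_prod
    (f := fun (i : Fin d) (t : ℝ) => t ^ (if i = i0 then q else 0) * rexp (-t ^ 2))]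
  rw [← Finset.mul_prod_erase _ _ (Finset.mem_univ i0)]
  rw [if_pos rfl, aux_gauss1 q hq]
  congr 1
  rw [Finset.prod_congr rfl (g := fun _ => Real.Gamma (1 / 2))]
  · simp
  · intro i hi
    rw [if_neg (Finset.ne_of_mem_erase hi), aux_gauss1 0 (by simp)]
    simp

lemma aux_Gamma_shift (a : ℝ) (ha : 0 < a) (m : ℕ) :
    Real.Gamma (a + m) = (∏ i ∈ Finset.range m, (a + i)) * Real.Gamma a := by
  induction m with
  | zero => simp
  | succ m ih =>
    rw [Finset.prod_range_succ, Nat.cast_succ, ← add_assoc, Real.Gamma_add_one (by positivity), ih]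
    ring

lemma aux_moment (d : ℕ) (hd : 2 ≤ d) (m : ℕ) (x : EuclideanSpace ℝ (Fin d)) (hx : ‖x‖ = 1) :
    ∫ s, ⟪x, (s : EuclideanSpace ℝ (Fin d))⟫ ^ (2 * m) ∂(sphereUniform d) =
      ∏ i ∈ Finset.range m, ((2 * (i : ℝ) + 1) / ((d : ℝ) + 2 * i)) := by
  have h := aux_sphere d hd (2 * m) (fun y => ⟪x, y⟫ ^ (2 * m))
    (by intro r _ y; rw [inner_smul_right, mul_pow])
  have h0 := aux_gaussd d hd 0 (by simp) x hx
  simp only [pow_zero, one_mul, Nat.cast_zero, zero_add] at h0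
  rw [aux_gaussd d hd _ (by simp) x hx, h0] at h
  have hdp : (0 : ℝ) < (d : ℝ) / 2 := by positivity
  have e1 : (((2 * m : ℕ) : ℝ) + 1) / 2 = 1 / 2 + m := by push_cast; ring
  have e2 : ((d : ℝ) + ((2 * m : ℕ) : ℝ)) / 2 = d / 2 + m := by push_cast; ring
  rw [e1, e2, aux_Gamma_shift _ (by norm_num), aux_Gamma_shift _ hdp] at h
  have g1 : Real.Gamma ((d : ℝ) / 2) ≠ 0 := (Real.Gamma_pos_of_pos hdp).ne'
  have g2 : Real.Gamma (1 / 2 : ℝ) ≠ 0 := (Real.Gamma_pos_of_pos (by norm_num)).ne'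
  have g3 : ∏ i ∈ Finset.range m, ((d : ℝ) / 2 + i) ≠ 0 :=
    Finset.prod_ne_zero_iff.2 fun i _ => by positivity
  have e3 : ∏ i ∈ Finset.range m, ((2 * (i : ℝ) + 1) / ((d : ℝ) + 2 * i)) =
      (∏ i ∈ Finset.range m, (1 / 2 + (i : ℝ))) / ∏ i ∈ Finset.range m, ((d : ℝ) / 2 + i) := by
    rw [← Finset.prod_div_distrib]
    refine Finset.prod_congr rfl fun i _ => ?_
    have : (d : ℝ) + 2 * i ≠ 0 := by positivity
    have : (d : ℝ) / 2 + i ≠ 0 := by positivity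
    field_simp
    ring
  rw [e3, eq_div_iff g3]
  have g4 : Real.Gamma (1 / 2 : ℝ) * Real.Gamma (1 / 2) ^ (d - 1) * Real.Gamma ((d : ℝ) / 2) ≠ 0 := by
    positivity
  apply mul_right_cancel₀ g4
  linear_combination -h

lemma aux_odd (d : ℕ) (hd : 2 ≤ d) (q : ℕ) (f : EuclideanSpace ℝ (Fin d) → ℝ)
    (hf : ∀ r : ℝ, ∀ y, f (r • y) = r ^ q * f y) (hq : Odd q) :
    ∫ s, f s ∂(sphereUniform d) = 0 := by
  have h := aux_sphere d hd q f (fun r _ => hf r)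
  have h1 : ∫ y, f y * rexp (-‖y‖ ^ 2) = 0 := by
    have := integral_neg_eq_self (fun y => f y * rexp (-‖y‖ ^ 2))
      (volume : Measure (EuclideanSpace ℝ (Fin d)))
    have h2 : ∀ y, f (-y) = - f y := fun y => by
      have := hf (-1) y
      rw [hq.neg_one_pow] at this
      simpa using this
    simp only [h2, norm_neg, neg_mul, integral_neg] at this
    linarith
  have h0 := aux_gaussd d hd 0 (by simp) (EuclideanSpace.single ⟨0, by omega⟩ 1) (by simp)
  simp only [pow_zero, one_mul, Nat.cast_zero, zero_add] at h0
  rw [h1, h0, zero_mul] at h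
  have hdp : (0 : ℝ) < ((d : ℝ) + q) / 2 := by positivity
  have g1 := (Real.Gamma_pos_of_pos hdp).ne'
  have g2 : Real.Gamma (1 / 2 : ℝ) ≠ 0 := (Real.Gamma_pos_of_pos (by norm_num)).ne'
  have h3 := h.symm
  simp only [mul_eq_zero, g1, or_false, pow_eq_zero_iff', g2, false_and] at h3
  exact h3

lemma aux_integrable (d : ℕ) (hd : 2 ≤ d) (f : EuclideanSpace ℝ (Fin d) → ℝ) (hf : Continuous f) :
    Integrable (fun s : Metric.sphere (0 : EuclideanSpace ℝ (Fin d)) 1 => f s)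
      (sphereUniform d) := by
  have := aux_prob d hd
  exact (hf.comp continuous_subtype_val).integrable_of_hasCompactSupport
    (HasCompactSupport.of_compactSpace _)

lemma aux_tensor (d p : ℕ) (y z : EuclideanSpace ℝ (Fin d)) :
    ∑ i : Fin p → Fin d, (∏ j, y (i j)) * (∏ j, z (i j)) = ⟪y, z⟫ ^ p := by
  rw [PiLp.inner_apply, Fintype.sum_pow]
  refine Finset.sum_congr rfl fun i _ => ?_
  rw [← Finset.prod_mul_distrib]
  refine Finset.prod_congr rfl fun j _ => ?_
  simp [mul_comm]

lemma aux_energy (d N : ℕ) (hd : 2 ≤ d) (hN : 2 ≤ N) (m : ℕ)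
    (X : Fin N → EuclideanSpace ℝ (Fin d)) (hX : ∀ i, ‖X i‖ = 1) :
    ∑ i : Fin (2 * m) → Fin d, ((1 / (N : ℝ)) * ∑ k, ∏ j, X k (i j) -
      ∫ s, ∏ j, (s : EuclideanSpace ℝ (Fin d)) (i j) ∂(sphereUniform d)) ^ 2 =
    (1 / (N : ℝ)) ^ 2 * ∑ k, ∑ l, ⟪X k, X l⟫ ^ (2 * m) -
      ∏ i ∈ Finset.range m, ((2 * (i : ℝ) + 1) / ((d : ℝ) + 2 * i)) := by
  have := aux_prob d hd
  set c := ∏ i ∈ Finset.range m, ((2 * (i : ℝ) + 1) / ((d : ℝ) + 2 * i)) with hc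
  set A : (Fin (2 * m) → Fin d) → ℝ := fun i =>
    ∫ s, ∏ j, (s : EuclideanSpace ℝ (Fin d)) (i j) ∂(sphereUniform d) with hA
  have hint : ∀ i : Fin (2 * m) → Fin d, Integrable
      (fun s : Metric.sphere (0 : EuclideanSpace ℝ (Fin d)) 1 =>
        ∏ j, (s : EuclideanSpace ℝ (Fin d)) (i j)) (sphereUniform d) := fun i =>
    aux_integrable d hd (fun s => ∏ j, s (i j)) (by fun_prop)
  have hAc : ∀ y : EuclideanSpace ℝ (Fin d), ‖y‖ = 1 → ∑ i, (∏ j, y (i j)) * A i = c := by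
    intro y hy
    rw [hc, ← aux_moment d hd m y hy]
    simp only [hA, ← integral_const_mul]
    rw [← integral_finsetSum _ (fun i _ => (hint i).const_mul _)]
    simp only [aux_tensor]
  have hAA : ∑ i, A i * A i = c := by
    have : ∀ i, A i * A i = ∫ s, A i * ∏ j, (s : EuclideanSpace ℝ (Fin d)) (i j)
        ∂(sphereUniform d) := fun i => by rw [integral_const_mul]
    simp only [this]
    rw [← integral_finsetSum _ (fun i _ => (hint i).const_mul _)]
    have h2 : ∀ s : Metric.sphere (0 : EuclideanSpace ℝ (Fin d)) 1,
        ∑ i, A i * ∏ j, (s : EuclideanSpace ℝ (Fin d)) (i j) = c := fun s => by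
      rw [← hAc s (by simp)]
      exact Finset.sum_congr rfl fun i _ => mul_comm _ _
    simp [h2]
  have hAB : ∑ i, (∑ k, ∏ j, X k (i j)) * A i = N * c := by
    simp only [Finset.sum_mul]
    rw [Finset.sum_comm]
    simp [hAc _ (hX _)]
  have hBB : ∑ i : Fin (2 * m) → Fin d, (∑ k, ∏ j, X k (i j)) * (∑ k, ∏ j, X k (i j)) =
      ∑ k, ∑ l, ⟪X k, X l⟫ ^ (2 * m) := by
    simp only [Finset.sum_mul_sum, ← aux_tensor]
    rw [Finset.sum_comm]
    refine Finset.sum_congr rfl fun k _ => ?_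
    rw [Finset.sum_comm]
  have hN0 : (N : ℝ) ≠ 0 := by positivity
  calc _ = ∑ i, ((1 / (N : ℝ)) ^ 2 * ((∑ k, ∏ j, X k (i j)) * (∑ k, ∏ j, X k (i j)))
        - 2 * (1 / (N : ℝ)) * ((∑ k, ∏ j, X k (i j)) * A i) + A i * A i) := by
        refine Finset.sum_congr rfl fun i _ => ?_
        ring
    _ = _ := by
        rw [Finset.sum_add_distrib, Finset.sum_sub_distrib, ← Finset.mul_sum, ← Finset.mul_sum,
          hAA, hAB, hBB]
        field_simp
        ring

lemma aux_pot (d N p : ℕ) (hpe : Even p)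
    (X : Fin N → EuclideanSpace ℝ (Fin d)) (hX : ∀ i, ‖X i‖ = 1) :
    framePotential d N (p : ℝ) X = ∑ k, ∑ l, ⟪X k, X l⟫ ^ p - N := by
  have : (N : ℝ) = ∑ k : Fin N, (1 : ℝ) := by simp
  rw [this, ← Finset.sum_sub_distrib, framePotential]
  refine Finset.sum_congr rfl fun k _ => ?_
  have h1 : (1 : ℝ) = ∑ l : Fin N, if k = l then 1 else 0 := by simp
  rw [h1, ← Finset.sum_sub_distrib]
  refine Finset.sum_congr rfl fun l _ => ?_
  by_cases h : k = l
  · subst h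
    simp [hX]
  · simp [h, hpe.pow_abs]

lemma aux_sym (d N : ℕ) (X : Fin N → EuclideanSpace ℝ (Fin d))
    (Y : Fin (2 * N) → EuclideanSpace ℝ (Fin d))
    (hY : ∀ i : Fin (2 * N), Y i =
      if h : (i : ℕ) < N then X ⟨(i : ℕ), h⟩
      else -X ⟨(i : ℕ) - N, by have := i.isLt; omega⟩) (f : EuclideanSpace ℝ (Fin d) → ℝ) :
    ∑ i, f (Y i) = ∑ k, (f (X k) + f (-X k)) := by
  rw [Finset.sum_add_distrib, ← Equiv.sum_comp (finCongr (two_mul N).symm), Fin.sum_univ_add]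
  congr 1 <;> refine Finset.sum_congr rfl fun k _ => ?_ <;> rw [hY] <;> simp

lemma aux_homog (d : ℕ) (s : Multiset (Fin d)) (r : ℝ) (y : EuclideanSpace ℝ (Fin d)) :
    (s.map fun a => (r • y) a).prod = r ^ s.card * (s.map fun a => y a).prod := by
  simp [Multiset.prod_map_mul]

lemma aux_design_mono (d N : ℕ) (hd : 2 ≤ d) (hN : 2 ≤ N) (m : ℕ)
    (X : Fin N → EuclideanSpace ℝ (Fin d)) (hX : ∀ i, ‖X i‖ = 1)
    (H : ∀ i : Fin (2 * m) → Fin d, (1 / (N : ℝ)) * ∑ k, ∏ j, X k (i j) =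
      ∫ s, ∏ j, (s : EuclideanSpace ℝ (Fin d)) (i j) ∂(sphereUniform d)) (n r : ℕ)
    (hnr : n + r = m) (s : Multiset (Fin d)) (hs : s.card = 2 * n) :
    (1 / (N : ℝ)) * ∑ k, (s.map fun a => X k a).prod =
      ∫ y, (s.map fun a => (y : EuclideanSpace ℝ (Fin d)) a).prod ∂(sphereUniform d) := by
  induction r generalizing n s with
  | zero =>
    obtain rfl : n = m := by omega
    induction s using Quotient.inductionOn with
    | _ l =>
    simp only [Multiset.quot_mk_to_coe, Multiset.coe_card] at hs
    have h := H (fun j => l.get (Fin.cast hs.symm j))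
    have e : ∀ y : EuclideanSpace ℝ (Fin d),
        ∏ j, y (l.get (Fin.cast hs.symm j)) = ((l : Multiset (Fin d)).map fun a => y a).prod := by
      intro y
      rw [Multiset.map_coe, Multiset.prod_coe, ← List.prod_ofFn]
      congr 1
      apply List.ext_get
      · simp [hs]
      · intro n h1 h2; simp
    simp only [e] at h
    exact h
  | succ r ih =>
    have h : ∀ a, _ := fun a => ih (n + 1) (by omega) (a ::ₘ a ::ₘ s) (by simp [hs]; ring)
    have e : ∀ y : EuclideanSpace ℝ (Fin d), ‖y‖ = 1 →
        (s.map fun a => y a).prod = ∑ b, ((b ::ₘ b ::ₘ s).map fun a => y a).prod := by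
      intro y hy
      have h1 : ∑ b, y b * y b = 1 := by
        have := EuclideanSpace.norm_sq_eq y
        rw [hy] at this
        simpa [pow_two] using this.symm
      simp only [Multiset.map_cons, Multiset.prod_cons, ← mul_assoc]
      rw [← Finset.sum_mul, h1, one_mul]
    have e1 : ∀ k, (s.map fun a => X k a).prod = _ := fun k => e (X k) (hX k)
    have e2 : ∀ y : Metric.sphere (0 : EuclideanSpace ℝ (Fin d)) 1,
      (s.map fun a => (y : EuclideanSpace ℝ (Fin d)) a).prod = _ := fun y => e y (by simp)
    simp only [e1, e2]
    rw [integral_finsetSum, Finset.sum_comm, Finset.mul_sum]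
    · exact Finset.sum_congr rfl fun b _ => h b
    · intro b _
      exact aux_integrable d hd (fun y => ((b ::ₘ b ::ₘ s).map fun a => y a).prod)
        (continuous_multiset_prod _ (fun a _ => by fun_prop))

lemma aux_design (d N : ℕ) (hd : 2 ≤ d) (hN : 2 ≤ N) (m : ℕ)
    (X : Fin N → EuclideanSpace ℝ (Fin d)) (hX : ∀ i, ‖X i‖ = 1)
    (Y : Fin (2 * N) → EuclideanSpace ℝ (Fin d))
    (hY : ∀ i : Fin (2 * N), Y i =
      if h : (i : ℕ) < N then X ⟨(i : ℕ), h⟩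
      else -X ⟨(i : ℕ) - N, by have := i.isLt; omega⟩)
    (H : ∀ i : Fin (2 * m) → Fin d, (1 / (N : ℝ)) * ∑ k, ∏ j, X k (i j) =
      ∫ s, ∏ j, (s : EuclideanSpace ℝ (Fin d)) (i j) ∂(sphereUniform d)) :
    IsSphericalDesign d (2 * m) (2 * N) Y := by
  intro h hdeg
  have hN0 : (N : ℝ) ≠ 0 := by positivity
  have key : ∀ s : Multiset (Fin d), s.card ≤ 2 * m →
      ∫ y, (s.map fun a => (y : EuclideanSpace ℝ (Fin d)) a).prod ∂(sphereUniform d) =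
      (1 / ((2 * N : ℕ) : ℝ)) * ∑ k, (s.map fun a => Y k a).prod := by
    intro s hs
    have hneg : ∀ y : EuclideanSpace ℝ (Fin d), (s.map fun a => (-y) a).prod =
        (-1) ^ s.card * (s.map fun a => y a).prod := fun y => by
      rw [← aux_homog]; simp
    rw [aux_sym d N X Y hY (fun y => (s.map fun a => y a).prod)]
    simp only [hneg]
    rcases Nat.even_or_odd s.card with he | ho
    · obtain ⟨n, hn⟩ := he
      rw [← aux_design_mono d N hd hN m X hX H n (m - n) (by omega) s (by omega)]
      rw [Even.neg_one_pow ⟨n, hn⟩]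
      simp only [one_mul, ← two_mul, ← Finset.mul_sum]
      push_cast
      field_simp
    · rw [aux_odd d hd _ (fun y => (s.map fun a => y a).prod) (aux_homog d s) ho]
      simp [ho.neg_one_pow]
  have hev : ∀ y : EuclideanSpace ℝ (Fin d), MvPolynomial.eval (fun i => y i) h =
      ∑ s ∈ h.support, h.coeff s * ((Finsupp.toMultiset s).map fun a => y a).prod := by
    intro y
    rw [MvPolynomial.eval_eq]
    refine Finset.sum_congr rfl fun s _ => ?_
    rw [Finsupp.toMultiset_map, Finsupp.prod_toMultiset,
      Finsupp.prod_mapDomain_index (by simp) (by intros; rw [pow_add])]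
    rfl
  simp only [hev]
  rw [integral_finsetSum, Finset.sum_comm, Finset.mul_sum]
  · refine Finset.sum_congr rfl fun s hs => ?_
    rw [integral_const_mul, key, ← Finset.mul_sum]
    · ring
    · have := MvPolynomial.le_totalDegree hs
      rw [Finsupp.card_toMultiset]
      exact this.trans hdeg
  · intro s _
    exact (aux_integrable d hd (fun y => ((Finsupp.toMultiset s).map fun a => y a).prod)
        (continuous_multiset_prod _ (fun a _ => by fun_prop))).const_mul _

lemma aux_design_conv (d N : ℕ) (hN : 2 ≤ N) (m : ℕ)
    (X : Fin N → EuclideanSpace ℝ (Fin d))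
    (Y : Fin (2 * N) → EuclideanSpace ℝ (Fin d))
    (hY : ∀ i : Fin (2 * N), Y i =
      if h : (i : ℕ) < N then X ⟨(i : ℕ), h⟩
      else -X ⟨(i : ℕ) - N, by have := i.isLt; omega⟩)
    (H : IsSphericalDesign d (2 * m) (2 * N) Y) (i : Fin (2 * m) → Fin d) :
    (1 / (N : ℝ)) * ∑ k, ∏ j, X k (i j) =
      ∫ s, ∏ j, (s : EuclideanSpace ℝ (Fin d)) (i j) ∂(sphereUniform d) := by
  have hN0 : (N : ℝ) ≠ 0 := by positivity
  have h := H (∏ j, MvPolynomial.X (i j)) (by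
    refine (MvPolynomial.totalDegree_finsetProd _ _).trans ?_
    simp)
  simp only [map_prod, MvPolynomial.eval_X] at h
  rw [h, aux_sym d N X Y hY (fun y => ∏ j, y (i j))]
  have : ∀ k, ∏ j, (-X k) (i j) = ∏ j, X k (i j) := fun k => by
    simp [Finset.prod_neg]
  simp only [this, ← two_mul, ← Finset.mul_sum]
  push_cast
  field_simp

/-- For an even integer `p`, `FP_{p,N,d}(X) = (FP_{p,2N,d}(X^sym) − 2N)/4
≥ N²·(1·3·5⋯(p−1))/(d(d+2)⋯(d+p−2)) − N`, with equality iff `X^sym` is a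
spherical `p`-design. -/
theorem framePotential_even_lower_bound
    (d N : ℕ) (hd : 2 ≤ d) (hN : 2 ≤ N) (p : ℕ) (hp2 : 2 ≤ p) (hpe : Even p)
    (X : Fin N → EuclideanSpace ℝ (Fin d)) (hX : ∀ i, ‖X i‖ = 1)
    (hcoh : coherence d N X < 1)
    (Y : Fin (2 * N) → EuclideanSpace ℝ (Fin d))
    (hY : ∀ i : Fin (2 * N), Y i =
      if h : (i : ℕ) < N then X ⟨(i : ℕ), h⟩
      else -X ⟨(i : ℕ) - N, by have := i.isLt; omega⟩) :
    framePotential d N (p : ℝ) X = (framePotential d (2 * N) (p : ℝ) Y - 2 * N) / 4 ∧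
    (N : ℝ) ^ 2 * (∏ i ∈ Finset.range (p / 2), ((2 * (i : ℝ) + 1) / ((d : ℝ) + 2 * i))) - N ≤
      framePotential d N (p : ℝ) X ∧
    (framePotential d N (p : ℝ) X =
        (N : ℝ) ^ 2 * (∏ i ∈ Finset.range (p / 2), ((2 * (i : ℝ) + 1) / ((d : ℝ) + 2 * i))) - N ↔
      IsSphericalDesign d p (2 * N) Y) := by
  obtain ⟨m, rfl⟩ : ∃ m, p = 2 * m := by
    obtain ⟨m, hm⟩ := hpe
    exact ⟨m, by omega⟩
  have hYn : ∀ i, ‖Y i‖ = 1 := by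
    intro i
    rw [hY]
    split_ifs <;> simp [hX]
  have hE := aux_energy d N hd hN m X hX
  have hN0 : (0 : ℝ) < N := by positivity
  rw [aux_pot d N _ hpe X hX, aux_pot d (2 * N) _ hpe Y hYn,
    show 2 * m / 2 = m by omega]
  have hS : ∑ k, ∑ l, ⟪Y k, Y l⟫ ^ (2 * m) = 4 * ∑ k, ∑ l, ⟪X k, X l⟫ ^ (2 * m) := by
    have h1 : ∀ k, ∑ l, ⟪Y k, Y l⟫ ^ (2 * m) = 2 * ∑ l, ⟪Y k, X l⟫ ^ (2 * m) := fun k => by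
      rw [aux_sym d N X Y hY (fun y => ⟪Y k, y⟫ ^ (2 * m))]
      simp only [inner_neg_right, hpe.neg_pow, ← two_mul, ← Finset.mul_sum]
    simp only [h1]
    rw [aux_sym d N X Y hY (fun y => 2 * ∑ l, ⟪y, X l⟫ ^ (2 * m))]
    simp only [inner_neg_left, hpe.neg_pow, ← two_mul, ← Finset.mul_sum]
    ring
  set S := ∑ k, ∑ l, ⟪X k, X l⟫ ^ (2 * m)
  set c := ∏ i ∈ Finset.range m, ((2 * (i : ℝ) + 1) / ((d : ℝ) + 2 * i))
  have hE' : S - N ^ 2 * c = N ^ 2 * ((1 / (N : ℝ)) ^ 2 * S - c) := by field_simp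
  refine ⟨?_, ?_, ?_⟩
  · rw [hS]; push_cast; ring
  · have : 0 ≤ (1 / (N : ℝ)) ^ 2 * S - c := by
      rw [← hE]; positivity
    have := mul_nonneg (sq_nonneg (N : ℝ)) this
    linarith
  · constructor
    · intro h
      have h0 : (1 / (N : ℝ)) ^ 2 * S - c = 0 := by
        have : (N : ℝ) ^ 2 * ((1 / (N : ℝ)) ^ 2 * S - c) = 0 := by linarith
        simpa [hN0.ne'] using this
      rw [h0, Finset.sum_eq_zero_iff_of_nonneg (fun i _ => sq_nonneg _)] at hE
      apply aux_design d N hd hN m X hX Y hY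
      intro i
      exact sub_eq_zero.1 (pow_eq_zero_iff (two_ne_zero) |>.1 (hE i (Finset.mem_univ i)))
    · intro h
      have h0 : (1 / (N : ℝ)) ^ 2 * S - c = 0 := by
        rw [← hE]
        refine Finset.sum_eq_zero fun i _ => ?_
        rw [aux_design_conv d N hN m X Y hY h i]
        simp
      rw [h0] at hE'
      linarith
end

section
/- Let N ≥ 4, m = ⌊N/2⌋, r > 0, and let f : (0,4r²] → ℝ be 2m-times differentiable with (−1)^k f^{(k)}(t) ≥ 0 for all t ∈ (0,4r²] and all integers 0 ≤ k ≤ 2m. Then any N equally spaced points on the circle C_r = {x ∈ ℝ² : ‖x‖ = r} (i.e., x_k = r(cos(θ + 2kπ/N), sin(θ + 2kπ/N)), k = 0,…,N−1, for some θ) minimize the energy Σ_{i≠j} f(‖x_i−x_j‖²) among all N-tuples of pairwise distinct points on C_r. If moreover (−1)^k f^{(k)}(t) > 0 for all t ∈ (0,4r²) and all 0 ≤ k ≤ 2m, then the N-tuples of equally spaced points are the only minimizers. -/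
open Real

/-- The energy `Σ_{i≠j} f(‖x_i − x_j‖²)` of a tuple of points in `ℝ²`. -/
noncomputable def pairEnergy (N : ℕ) (f : ℝ → ℝ)
    (X : Fin N → EuclideanSpace ℝ (Fin 2)) : ℝ :=
  ∑ i : Fin N, ∑ j : Fin N, if i ≠ j then f (‖X i - X j‖ ^ 2) else 0

/-- The point `r(cos θ, sin θ)` on the circle of radius `r` in `ℝ²`. -/
noncomputable def circlePt (r θ : ℝ) : EuclideanSpace ℝ (Fin 2) :=
  (WithLp.equiv 2 (Fin 2 → ℝ)).symm ![r * cos θ, r * sin θ]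

structure AMon (A B : ℝ) (n : ℕ) (φ : ℕ → ℝ → ℝ) : Prop where
  cont : ∀ j ≤ n, Continuous (φ j)
  nonneg : ∀ j ≤ n, ∀ x, 0 ≤ φ j x
  der : ∀ j < n, ∀ x ∈ Set.Ioo A B, HasDerivAt (φ j) (φ (j+1) x) x

noncomputable def dd (a : ℝ) (φ : ℕ → ℝ → ℝ) : ℕ → ℝ → ℝ :=
  fun j t => ∫ s in (0:ℝ)..1, s^j * φ (j+1) (a + s * (t - a))

theorem mix_mem {A B a t s : ℝ} (ha : a ∈ Set.Icc A B) (ht : t ∈ Set.Icc A B)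
    (hs : s ∈ Set.Icc (0:ℝ) 1) : a + s * (t - a) ∈ Set.Icc A B := by
  obtain ⟨h1, h2⟩ := ha
  obtain ⟨h3, h4⟩ := ht
  obtain ⟨h5, h6⟩ := hs
  constructor <;> nlinarith

theorem mix_mem_right {A B a t s : ℝ} (ha : a ∈ Set.Icc A B) (ht : t ∈ Set.Ioo A B)
    (hs : s ∈ Set.Ioc (0:ℝ) 1) : a + s * (t - a) ∈ Set.Ioo A B := by
  obtain ⟨h1, h2⟩ := ha
  obtain ⟨h3, h4⟩ := ht
  obtain ⟨h5, h6⟩ := hs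
  constructor <;> nlinarith

theorem mix_mem_left {A B a t s : ℝ} (ha : a ∈ Set.Ioo A B) (ht : t ∈ Set.Icc A B)
    (hs : s ∈ Set.Ioo (0:ℝ) 1) : a + s * (t - a) ∈ Set.Ioo A B := by
  obtain ⟨h1, h2⟩ := ha
  obtain ⟨h3, h4⟩ := ht
  obtain ⟨h5, h6⟩ := hs
  constructor <;> nlinarith

theorem mix_mem_ne {A B a t s : ℝ} (ha : a ∈ Set.Icc A B) (ht : t ∈ Set.Icc A B) (hne : t ≠ a)
    (hs : s ∈ Set.Ioo (0:ℝ) 1) : a + s * (t - a) ∈ Set.Ioo A B := by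
  obtain ⟨h1, h2⟩ := ha
  obtain ⟨h3, h4⟩ := ht
  obtain ⟨h5, h6⟩ := hs
  rcases lt_or_gt_of_ne hne with h | h
  · constructor <;> nlinarith [mul_pos h5 (sub_pos.2 h), mul_pos (sub_pos.2 h6) (sub_pos.2 h)]
  · constructor <;> nlinarith [mul_pos h5 (sub_pos.2 h), mul_pos (sub_pos.2 h6) (sub_pos.2 h)]

theorem AMon.dd {A B : ℝ} {n : ℕ} {φ : ℕ → ℝ → ℝ} (h : AMon A B (n+1) φ) {a : ℝ}
    (ha : a ∈ Set.Icc A B) : AMon A B n (dd a φ) := by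
  refine ⟨?_, ?_, ?_⟩
  · intro j hj
    have hc := h.cont (j+1) (by omega)
    unfold _root_.dd
    apply intervalIntegral.continuous_parametric_intervalIntegral_of_continuous' (f := fun t s => s^j * φ (j+1) (a + s * (t - a)))
    simp only [Function.uncurry_def]
    fun_prop
  · intro j hj x
    apply intervalIntegral.integral_nonneg (by norm_num)
    intro s hs
    exact mul_nonneg (pow_nonneg hs.1 _) (h.nonneg _ (by omega) _)
  · intro j hj x hx
    have hc := h.cont (j+1) (by omega)
    have hc2 := h.cont (j+1+1) (by omega)
    obtain ⟨C, hC⟩ := (isCompact_Icc (a := A) (b := B)).exists_bound_of_continuousOn hc2.continuousOn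
    have key := intervalIntegral.hasDerivAt_integral_of_dominated_loc_of_deriv_le
      (μ := MeasureTheory.volume) (a := 0) (b := 1) (x₀ := x) (s := Set.Ioo A B)
      (F := fun t s => s^j * φ (j+1) (a + s * (t - a)))
      (F' := fun t s => s^(j+1) * φ (j+1+1) (a + s * (t - a)))
      (bound := fun _ => C) (Ioo_mem_nhds hx.1 hx.2)
      (Filter.Eventually.of_forall fun t => (by fun_prop : Continuous _).aestronglyMeasurable)
      ((by fun_prop : Continuous _).intervalIntegrable _ _)
      ((by fun_prop : Continuous _).aestronglyMeasurable)
      (Filter.Eventually.of_forall ?_) (by simp) (Filter.Eventually.of_forall ?_)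
    · exact key.2
    · intro s hs t ht
      rw [Set.uIoc_of_le zero_le_one] at hs
      have h1 := hC _ (mix_mem ha ⟨ht.1.le, ht.2.le⟩ ⟨hs.1.le, hs.2⟩)
      rw [norm_mul]
      have h2 : ‖s^(j+1)‖ ≤ 1 := by
        rw [Real.norm_of_nonneg (pow_nonneg hs.1.le _)]
        exact pow_le_one₀ hs.1.le hs.2
      nlinarith [norm_nonneg (s^(j+1)), norm_nonneg (φ (j+1+1) (a + s * (t - a)))]
    · intro s hs t ht
      rw [Set.uIoc_of_le zero_le_one] at hs
      have h1 := h.der (j+1) (by omega) _ (mix_mem_right ha ht hs)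
      have h2 : HasDerivAt (fun t => a + s * (t - a)) (s * 1) t :=
        (((hasDerivAt_id t).sub_const a).const_mul s).const_add a
      have h3 := (h1.comp t h2).const_mul (s^j)
      exact h3.congr_deriv (by ring)

theorem AMon.dd_eq {A B : ℝ} {n : ℕ} {φ : ℕ → ℝ → ℝ} (h : AMon A B (n+1) φ) {a t : ℝ}
    (ha : a ∈ Set.Icc A B) (ht : t ∈ Set.Icc A B) :
    φ 0 t = φ 0 a + (t - a) * _root_.dd a φ 0 t := by
  by_cases hne : t = a
  · subst hne; simp
  have hc := h.cont 0 (by omega)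
  have hc1 := h.cont (0+1) (by omega)
  have := intervalIntegral.integral_eq_sub_of_hasDerivAt_of_le (a := 0) (b := 1)
    (f := fun s => φ 0 (a + s * (t - a))) (f' := fun s => φ (0+1) (a + s * (t - a)) * (t - a))
    zero_le_one (by fun_prop) ?_ ((by fun_prop : Continuous _).intervalIntegrable _ _)
  · unfold _root_.dd
    rw [intervalIntegral.integral_mul_const] at this
    simp at this ⊢
    linarith
  · intro s hs
    have h1 := h.der 0 (by omega) _ (mix_mem_ne ha ht hne hs)
    have h2 : HasDerivAt (fun s => a + s * (t - a)) (1 * (t - a)) s :=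
        ((hasDerivAt_id s).mul_const _).const_add a
    have h3 := h1.comp s h2
    rw [one_mul] at h3
    exact h3

theorem dd_pos {A B : ℝ} {n : ℕ} {φ : ℕ → ℝ → ℝ} (h : AMon A B (n+1) φ)
    (hp : ∀ j ≤ n + 1, ∀ x ∈ Set.Ioo A B, 0 < φ j x) {a t : ℝ} {j : ℕ} (hj : j ≤ n)
    (hat : ∀ s ∈ Set.Ioo (0:ℝ) 1, a + s * (t - a) ∈ Set.Ioo A B) : 0 < dd a φ j t := by
  have hc := h.cont (j+1) (by omega)
  apply intervalIntegral.intervalIntegral_pos_of_pos_on ((by fun_prop : Continuous _).intervalIntegrable _ _) _ zero_lt_one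
  intro s hs
  exact mul_pos (pow_pos hs.1 _) (hp _ (by omega) _ (hat s hs))

noncomputable def ddn (a : ℕ → ℝ) (φ : ℕ → ℝ → ℝ) : ℕ → ℕ → ℝ → ℝ
  | 0 => φ
  | k+1 => dd (a k) (ddn a φ k)

theorem AMon.ddn {A B : ℝ} {n : ℕ} {φ : ℕ → ℝ → ℝ} (h : AMon A B n φ) {a : ℕ → ℝ}
    (ha : ∀ i < n, a i ∈ Set.Icc A B) : ∀ k ≤ n, AMon A B (n - k) (ddn a φ k) := by
  intro k
  induction k with
  | zero => intro _; exact h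
  | succ k ih =>
    intro hk
    have h1 := ih (by omega)
    rw [show n - k = (n - (k+1)) + 1 by omega] at h1
    exact h1.dd (ha k (by omega))

theorem AMon.newton {A B : ℝ} {n : ℕ} {φ : ℕ → ℝ → ℝ} (h : AMon A B n φ) {a : ℕ → ℝ}
    (ha : ∀ i < n, a i ∈ Set.Icc A B) {t : ℝ} (ht : t ∈ Set.Icc A B) : ∀ k ≤ n,
    φ 0 t = ∑ l ∈ Finset.range k, _root_.ddn a φ l 0 (a l) * ∏ i ∈ Finset.range l, (t - a i)
      + _root_.ddn a φ k 0 t * ∏ i ∈ Finset.range k, (t - a i) := by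
  intro k
  induction k with
  | zero => intro _; simp [_root_.ddn]
  | succ k ih =>
    intro hk
    have h1 := h.ddn ha k (by omega)
    rw [show n - k = (n - (k+1)) + 1 by omega] at h1
    have h2 := h1.dd_eq (ha k (by omega)) ht
    rw [ih (by omega), Finset.sum_range_succ, Finset.prod_range_succ, h2]
    simp only [_root_.ddn]
    ring

theorem AMon.ddn_pos {A B : ℝ} {n : ℕ} {φ : ℕ → ℝ → ℝ} (h : AMon A B n φ) {a : ℕ → ℝ}
    (ha : ∀ i < n, a i ∈ Set.Icc A B) (hp : ∀ j ≤ n, ∀ x ∈ Set.Ioo A B, 0 < φ j x) :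
    ∀ k ≤ n, ∀ j ≤ n - k, ∀ x ∈ Set.Ioo A B, 0 < _root_.ddn a φ k j x := by
  intro k
  induction k with
  | zero => intro _ j hj; exact hp j (by omega)
  | succ k ih =>
    intro hk j hj x hx
    have h1 := h.ddn ha k (by omega)
    have h2 := ih (by omega)
    rw [show n - k = (n - (k+1)) + 1 by omega] at h1 h2
    exact dd_pos h1 h2 hj fun s hs => mix_mem_right (ha k (by omega)) hx ⟨hs.1, hs.2.le⟩

/-- Newton form with nonnegative coefficients and nonnegative remainder. -/
theorem AMon.exists_newton {A B : ℝ} {n : ℕ} {φ : ℕ → ℝ → ℝ} (h : AMon A B (n+1) φ) {a : ℕ → ℝ}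
    (ha : ∀ i < n + 1, a i ∈ Set.Icc A B) (hl : a n ∈ Set.Ioo A B) :
    ∃ (c : ℕ → ℝ) (R : ℝ → ℝ), (∀ k < n + 1, 0 ≤ c k) ∧ (∀ t, 0 ≤ R t) ∧
      (∀ t ∈ Set.Icc A B, φ 0 t = ∑ l ∈ Finset.range (n+1), c l * ∏ i ∈ Finset.range l, (t - a i)
        + R t * ∏ i ∈ Finset.range (n+1), (t - a i)) ∧
      ((∀ j ≤ n + 1, ∀ x ∈ Set.Ioo A B, 0 < φ j x) → ∀ t ∈ Set.Icc A B, 0 < R t) := by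
  refine ⟨fun l => _root_.ddn a φ l 0 (a l), _root_.ddn a φ (n+1) 0, ?_, ?_, ?_, ?_⟩
  · intro k hk
    exact (h.ddn ha k hk.le).nonneg 0 (by omega) _
  · exact (h.ddn ha (n+1) le_rfl).nonneg 0 (by omega)
  · intro t ht
    exact h.newton ha ht (n+1) le_rfl
  · intro hp t ht
    have h1 := h.ddn ha n (by omega)
    have h2 := h.ddn_pos ha hp n (by omega)
    rw [show n + 1 - n = 0 + 1 by omega] at h1 h2
    exact dd_pos h1 h2 le_rfl fun s hs => mix_mem_left hl ht hs

/-- nonnegative combinations of `cos (d θ)`, `|d| ≤ n`. -/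
inductive PDef : ℕ → (ℝ → ℝ) → Prop
  | zero (n : ℕ) : PDef n (fun _ => 0)
  | cos (n : ℕ) (d : ℤ) (h : |d| ≤ n) : PDef n (fun θ => Real.cos (d * θ))
  | add (n : ℕ) (P Q : ℝ → ℝ) : PDef n P → PDef n Q → PDef n (fun θ => P θ + Q θ)
  | smul (n : ℕ) (c : ℝ) (P : ℝ → ℝ) : 0 ≤ c → PDef n P → PDef n (fun θ => c * P θ)

theorem PDef.congr {n : ℕ} {P Q : ℝ → ℝ} (h : PDef n P) (hPQ : ∀ θ, P θ = Q θ) : PDef n Q := by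
  rwa [← show P = Q from funext hPQ]

theorem PDef.mono {n n' : ℕ} {P : ℝ → ℝ} (h : PDef n P) (hn : n ≤ n') : PDef n' P := by
  induction h with
  | zero => exact .zero _
  | cos d h => exact .cos _ d (h.trans (by exact_mod_cast hn))
  | add P Q _ _ h1 h2 => exact .add _ _ _ h1 h2
  | smul c P hc _ h1 => exact .smul _ _ _ hc h1

theorem PDef.sum {n : ℕ} (k : ℕ) (P : ℕ → ℝ → ℝ) (h : ∀ i < k, PDef n (P i)) :
    PDef n (fun θ => ∑ i ∈ Finset.range k, P i θ) := by
  induction k with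
  | zero => simpa using PDef.zero n
  | succ k ih =>
    simp only [Finset.sum_range_succ]
    exact .add _ _ _ (ih fun i hi => h i (by omega)) (h k (by omega))

theorem PDef.cos_mul {n n' : ℕ} {Q : ℝ → ℝ} (d : ℤ) (hd : |d| ≤ n) (h : PDef n' Q) :
    PDef (n + n') (fun θ => Real.cos (d * θ) * Q θ) := by
  induction h with
  | zero => simpa using PDef.zero _
  | cos e he =>
    have h1 : |d + e| ≤ ((n + n' : ℕ) : ℤ) := (abs_add_le d e).trans (by push_cast; omega)
    have h2 : |d - e| ≤ ((n + n' : ℕ) : ℤ) := (abs_sub d e).trans (by push_cast; omega)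
    refine (PDef.add _ _ _ (.smul _ (1/2) _ (by norm_num) (.cos _ _ h1))
      (.smul _ (1/2) _ (by norm_num) (.cos _ _ h2))).congr fun θ => ?_
    push_cast
    rw [add_mul, sub_mul, Real.cos_add, Real.cos_sub]
    ring
  | add P Q _ _ h1 h2 => exact (PDef.add _ _ _ h1 h2).congr fun θ => by ring
  | smul c P hc _ h1 => exact (PDef.smul _ c _ hc h1).congr fun θ => by ring

theorem PDef.mul {n n' : ℕ} {P Q : ℝ → ℝ} (hP : PDef n P) (hQ : PDef n' Q) :
    PDef (n + n') (fun θ => P θ * Q θ) := by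
  induction hP with
  | zero => simpa using PDef.zero _
  | cos e he => exact PDef.cos_mul e he hQ
  | add P Q _ _ h1 h2 => exact (PDef.add _ _ _ h1 h2).congr fun θ => by ring
  | smul c P hc _ h1 => exact (PDef.smul _ c _ hc h1).congr fun θ => by ring

theorem sum_cos_sub {N : ℕ} (x : Fin N → ℝ) :
    ∑ i, ∑ j, Real.cos (x i - x j) = (∑ i, Real.cos (x i))^2 + (∑ i, Real.sin (x i))^2 := by
  simp only [Real.cos_sub, Finset.sum_add_distrib, pow_two, Finset.sum_mul_sum]

theorem sum_cos_eq_zero {N : ℕ} (hN : 0 < N) (d : ℤ) (hd : d ≠ 0) (hdN : |d| < N) :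
    (∑ i : Fin N, Real.cos (d * (2 * ((i : ℕ) : ℝ) * π / N))) = 0 ∧
    (∑ i : Fin N, Real.sin (d * (2 * ((i : ℕ) : ℝ) * π / N))) = 0 := by
  have hN0 : (N : ℂ) ≠ 0 := by exact_mod_cast hN.ne'
  set ζ : ℂ := Complex.exp (d * (2 * π * Complex.I / N)) with hζ
  have h1 : ζ ^ N = 1 := by
    rw [hζ, ← Complex.exp_nat_mul]
    rw [Complex.exp_eq_one_iff]
    exact ⟨d, by field_simp⟩
  have h2 : ζ ≠ 1 := by
    intro h
    rw [hζ, Complex.exp_eq_one_iff] at h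
    obtain ⟨n, hn⟩ := h
    have hpi : (2 * π * Complex.I : ℂ) ≠ 0 := Complex.two_pi_I_ne_zero
    have h3 : (d : ℂ) = n * N := by
      have h4 : (d : ℂ) * (2 * π * Complex.I) = (n * N) * (2 * π * Complex.I) := by
        field_simp at hn
        linear_combination (2 * π * Complex.I) * hn
      exact mul_right_cancel₀ hpi h4
    have h5 : d = n * N := by exact_mod_cast h3
    have : d = 0 := Int.eq_zero_of_abs_lt_dvd (m := (N:ℤ)) ⟨n, by rw [h5]; ring⟩ hdN
    exact hd this
  have h3 : ∑ i : Fin N, ζ ^ (i : ℕ) = 0 := by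
    rw [Fin.sum_univ_eq_sum_range (fun i => ζ ^ i)]
    rw [geom_sum_eq h2, h1]; simp
  have h4 : ∀ i : Fin N, ζ ^ (i : ℕ) = Complex.exp (((d * (2 * ((i : ℕ) : ℝ) * π / N) : ℝ) : ℂ) * Complex.I) := by
    intro i
    rw [hζ, ← Complex.exp_nat_mul]
    congr 1
    push_cast
    ring
  simp only [h4] at h3
  constructor
  · have := congrArg Complex.re h3
    rw [Complex.re_sum] at this
    simpa only [Complex.exp_ofReal_mul_I_re, Complex.zero_re] using this
  · have := congrArg Complex.im h3
    rw [Complex.im_sum] at this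
    simpa only [Complex.exp_ofReal_mul_I_im, Complex.zero_im] using this

theorem PDef.energy_le {n N : ℕ} (hn : n < N) {P : ℝ → ℝ} (hP : PDef n P) (x : Fin N → ℝ) :
    ∑ i : Fin N, ∑ j : Fin N, P (2 * ((i : ℕ) : ℝ) * π / N - 2 * ((j : ℕ) : ℝ) * π / N) ≤
    ∑ i, ∑ j, P (x i - x j) := by
  induction hP with
  | zero => simp
  | cos d hd =>
    by_cases h0 : d = 0
    · subst h0; simp
    have h := sum_cos_eq_zero (N := N) (by omega) d h0 (by omega)
    simp only [mul_sub, sum_cos_sub (fun i : Fin N => (d:ℝ) * (2 * ((i : ℕ) : ℝ) * π / N)),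
      sum_cos_sub (fun i : Fin N => (d:ℝ) * x i), h.1, h.2]
    have h3 := sq_nonneg (∑ i, Real.cos (d * x i))
    have h4 := sq_nonneg (∑ i, Real.sin (d * x i))
    linarith
  | add P Q _ _ h1 h2 =>
    simp only [Finset.sum_add_distrib]
    exact add_le_add h1 h2
  | smul c P hc _ h1 =>
    simp only [← Finset.mul_sum]
    exact mul_le_mul_of_nonneg_left h1 hc

noncomputable def qfac (α : ℝ) (n : ℕ) : ℝ := ∏ i ∈ Finset.range n, Real.sin ((i + 1 : ℕ) * α)

noncomputable def qbin (α : ℝ) (n j : ℕ) : ℝ := qfac α n / (qfac α j * qfac α (n - j))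

noncomputable def Epr (α : ℝ) (n : ℕ) (θ : ℝ) : ℝ :=
  ∏ i ∈ Finset.range n, 2 * Real.cos ((θ + ((n:ℝ) - 1 - 2 * i) * α) / 2)

theorem Epr_succ (α : ℝ) (n : ℕ) (θ : ℝ) :
    Epr α (n+1) θ = Epr α n (θ + α) * (2 * Real.cos ((θ - n * α) / 2)) := by
  unfold Epr
  rw [Finset.prod_range_succ]
  congr 1
  · apply Finset.prod_congr rfl
    intro i _
    push_cast
    ring_nf
  · push_cast
    ring_nf

theorem Epr_add_two (α : ℝ) (n : ℕ) (θ : ℝ) :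
    Epr α (n+2) θ = Epr α n θ * (2 * (Real.cos θ + Real.cos ((n+1) * α))) := by
  rw [Epr_succ]
  unfold Epr
  rw [Finset.prod_range_succ']
  have h1 : ∏ i ∈ Finset.range n, 2 * Real.cos ((θ + α + (((n+1:ℕ):ℝ) - 1 - 2 * ((i+1:ℕ):ℝ)) * α) / 2)
     = ∏ i ∈ Finset.range n, 2 * Real.cos ((θ + ((n:ℝ) - 1 - 2 * i) * α) / 2) := by
    apply Finset.prod_congr rfl
    intro i _
    push_cast
    ring_nf
  rw [h1, mul_assoc]
  congr 1
  rw [Real.cos_add_cos]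
  push_cast
  ring_nf

theorem qfac_pos {α : ℝ} {n : ℕ} (h : ∀ i, 1 ≤ i → i ≤ n → 0 < Real.sin (i * α)) : 0 < qfac α n := by
  unfold qfac
  apply Finset.prod_pos
  intro i hi
  rw [Finset.mem_range] at hi
  exact h (i+1) (by omega) (by omega)

theorem qfac_succ (α : ℝ) (n : ℕ) : qfac α (n+1) = qfac α n * Real.sin ((n + 1 : ℕ) * α) := by
  unfold qfac
  rw [Finset.prod_range_succ]

theorem Epr_expand {α : ℝ} (n : ℕ) (h : ∀ i : ℕ, 1 ≤ i → i ≤ n → 0 < Real.sin (i * α)) :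
    ∀ θ ψ : ℝ, Epr α n θ * Real.cos ψ =
      ∑ j ∈ Finset.range (n+1), qbin α n j * Real.cos (((n:ℝ) - 2 * j) * θ / 2 + ψ) := by
  induction n with
  | zero => intro θ ψ; simp [Epr, qbin, qfac]
  | succ n ih =>
    intro θ ψ
    have ih := ih (fun i h1 h2 => h i h1 (by omega))
    have hS : 0 < Real.sin ((n+1:ℕ) * α) := h (n+1) (by omega) le_rfl
    have hF : ∀ j ≤ n + 1, 0 < qfac α j := fun j hj => qfac_pos fun i h1 h2 => h i h1 (by omega)
    -- the split of each term
    have split : ∀ j ∈ Finset.range (n+1+1), qbin α (n+1) j * Real.cos ((((n+1:ℕ):ℝ) - 2 * j) * θ / 2 + ψ)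
        = qbin α (n+1) j * Real.sin (((n:ℝ)+1-j)*α) / Real.sin ((n+1:ℕ) * α) *
            Real.cos ((((n+1:ℕ):ℝ) - 2 * j) * θ / 2 + ψ - j * α)
          + qbin α (n+1) j * Real.sin (j*α) / Real.sin ((n+1:ℕ) * α) *
            Real.cos ((((n+1:ℕ):ℝ) - 2 * j) * θ / 2 + ψ + ((n:ℝ)+1-j) * α) := by
      intro j _
      generalize (((n+1:ℕ):ℝ) - 2 * j) * θ / 2 + ψ = y
      have e : Real.sin ((n+1:ℕ) * α) * Real.cos y = Real.sin (((n:ℝ)+1-j)*α) * Real.cos (y - j * α)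
          + Real.sin (j*α) * Real.cos (y + ((n:ℝ)+1-j) * α) := by
        have : ((n+1:ℕ):ℝ) * α = ((n:ℝ)+1-j)*α + j * α := by push_cast; ring
        rw [this]
        generalize ((n:ℝ)+1-j)*α = u
        generalize (j:ℝ) * α = v
        rw [Real.sin_add, Real.cos_sub, Real.cos_add]
        ring
      have hS' := hS.ne'
      generalize Real.sin ((n+1:ℕ) * α) = S at hS' e
      generalize qbin α (n+1) j = q
      rw [div_mul_eq_mul_div, div_mul_eq_mul_div, ← add_div, eq_div_iff hS']
      linear_combination q * e
    rw [Finset.sum_congr rfl split, Finset.sum_add_distrib, Finset.sum_range_succ]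
    rw [Finset.sum_range_succ' (n := n+1)]
    have z1 : Real.sin (((n:ℝ)+1-((n+1:ℕ):ℝ))*α) = 0 := by push_cast; simp
    have z2 : Real.sin (((0:ℕ):ℝ)*α) = 0 := by simp
    rw [z1, z2]
    simp only [mul_zero, zero_div, zero_mul, add_zero]
    rw [← Finset.sum_add_distrib, Epr_succ]
    rw [mul_right_comm, ih, Finset.sum_mul]
    apply Finset.sum_congr rfl
    intro j hj
    rw [Finset.mem_range] at hj
    have b1 : qbin α (n+1) j * Real.sin (((n:ℝ)+1-j)*α) / Real.sin ((n+1:ℕ) * α) = qbin α n j := by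
      unfold qbin
      have e1 := qfac_succ α (n - j)
      rw [show n - j + 1 = n + 1 - j by omega] at e1
      have e2 : ((n + 1 - j : ℕ) : ℝ) = (n:ℝ)+1-j := by
        rw [Nat.cast_sub (by omega)]; push_cast; ring
      rw [e2] at e1
      have p1 := hF j (by omega)
      have p2 := hF (n - j) (by omega)
      have p3 := hF (n + 1 - j) (by omega)
      have p4 : Real.sin (((n:ℝ)+1-j)*α) ≠ 0 := by
        intro h0; rw [h0] at e1; simp at e1; exact p3.ne' e1
      rw [e1, qfac_succ]
      generalize Real.sin ((n+1:ℕ) * α) = S at hS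
      generalize Real.sin (((n:ℝ)+1-j)*α) = S' at p4
      field_simp
    have b2 : qbin α (n+1) (j+1) * Real.sin ((j+1:ℕ)*α) / Real.sin ((n+1:ℕ) * α) = qbin α n j := by
      unfold qbin
      have p1 := hF j (by omega)
      have p2 := hF (n - j) (by omega)
      have p4 : 0 < Real.sin ((j+1:ℕ)*α) := h (j+1) (by omega) (by omega)
      rw [qfac_succ, qfac_succ, show n + 1 - (j+1) = n - j by omega]
      generalize Real.sin ((n+1:ℕ) * α) = S at hS
      generalize Real.sin ((j+1:ℕ) * α) = S' at p4
      field_simp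
    rw [b1, b2, mul_assoc, ← mul_add]
    congr 1
    rw [show ∀ x y : ℝ, Real.cos x * (2 * Real.cos y) = Real.cos (x + y) + Real.cos (x - y) by
      intro x y; rw [Real.cos_add, Real.cos_sub]; ring]
    push_cast
    congr 2 <;> ring

theorem qbin_nonneg {α : ℝ} {n j : ℕ} (h : ∀ i : ℕ, 1 ≤ i → i ≤ n → 0 < Real.sin (i * α))
    (hj : j ≤ n) : 0 ≤ qbin α n j := by
  unfold qbin
  have hF : ∀ j ≤ n, 0 < qfac α j := fun j hj => qfac_pos fun i h1 h2 => h i h1 (by omega)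
  have := hF n le_rfl
  have := hF j hj
  have := hF (n - j) (by omega)
  positivity

theorem PDef_odd {α : ℝ} (k : ℕ) (h : ∀ i : ℕ, 1 ≤ i → i ≤ 2 * k → 0 < Real.sin (i * α)) :
    PDef k (fun θ => ∏ l ∈ Finset.range k, (Real.cos θ + Real.cos ((2 * l + 1) * α))) := by
  have e : ∀ θ, Epr α (2*k) θ = 2^k * ∏ l ∈ Finset.range k, (Real.cos θ + Real.cos ((2 * l + 1) * α)) := by
    intro θ
    clear h
    induction k with
    | zero => simp [Epr]
    | succ k ih =>
      rw [show 2 * (k+1) = 2*k+2 by ring, Epr_add_two, ih, Finset.prod_range_succ]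
      push_cast
      ring
  have e2 : PDef k (fun θ => (1/2^k) * ∑ j ∈ Finset.range (2*k+1),
      qbin α (2*k) j * Real.cos (((k - j : ℤ) : ℝ) * θ)) := by
    refine .smul _ _ _ (by positivity) (PDef.sum _ _ fun j hj => .smul _ _ _ (qbin_nonneg h (by omega)) (.cos _ _ ?_))
    rw [abs_le]; constructor <;> omega
  refine e2.congr fun θ => ?_
  have := Epr_expand (2*k) h θ 0
  rw [Real.cos_zero, mul_one, e] at this
  have e3 : ∑ j ∈ Finset.range (2*k+1), qbin α (2*k) j * Real.cos (((k - j : ℤ) : ℝ) * θ)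
     = 2^k * ∏ l ∈ Finset.range k, (Real.cos θ + Real.cos ((2 * l + 1) * α)) := by
    rw [this]
    apply Finset.sum_congr rfl
    intro j _
    push_cast
    congr 2
    ring
  rw [e3, ← mul_assoc, one_div, inv_mul_cancel₀ (by positivity), one_mul]

theorem PDef_even {α : ℝ} (k : ℕ) (h : ∀ i : ℕ, 1 ≤ i → i ≤ 2 * k + 1 → 0 < Real.sin (i * α)) :
    PDef (k+1) (fun θ => ∏ l ∈ Finset.range (k+1), (Real.cos θ + Real.cos ((2 * l) * α))) := by
  have e : ∀ θ, Epr α (2*k+1) θ * (2 * Real.cos (θ/2)) = 2^(k+1) * ∏ l ∈ Finset.range (k+1), (Real.cos θ + Real.cos ((2 * l) * α)) := by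
    intro θ
    clear h
    induction k with
    | zero =>
      simp [Epr]
      have := Real.cos_sq (θ/2)
      rw [show 2 * (θ/2) = θ by ring] at this
      nlinarith
    | succ k ih =>
      rw [show 2 * (k+1) + 1 = 2*k+1+2 by ring, Epr_add_two, mul_right_comm, ih, Finset.prod_range_succ _ (k+1)]
      push_cast
      rw [show (2 * (k:ℝ) + 1 + 1) = 2 * (k + 1) by ring]
      ring
  have e2 : PDef (k+1) (fun θ => (1/2^(k+1)) * ∑ j ∈ Finset.range (2*k+1+1),
      qbin α (2*k+1) j * (Real.cos (((k + 1 - j : ℤ) : ℝ) * θ) + Real.cos (((k - j : ℤ) : ℝ) * θ))) := by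
    refine .smul _ _ _ (by positivity) (PDef.sum _ _ fun j hj => .smul _ _ _ (qbin_nonneg h (by omega)) (.add _ _ _ (.cos _ _ ?_) (.cos _ _ ?_)))
    · rw [abs_le]; constructor <;> omega
    · rw [abs_le]; constructor <;> omega
  refine e2.congr fun θ => ?_
  have := Epr_expand (2*k+1) h θ 0
  rw [Real.cos_zero, mul_one] at this
  have e4 := e θ
  rw [this, Finset.sum_mul] at e4
  have e3 : ∑ j ∈ Finset.range (2*k+1+1), qbin α (2*k+1) j * (Real.cos (((k + 1 - j : ℤ) : ℝ) * θ) + Real.cos (((k - j : ℤ) : ℝ) * θ))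
     = 2^(k+1) * ∏ l ∈ Finset.range (k+1), (Real.cos θ + Real.cos ((2 * l) * α)) := by
    rw [← e4]
    apply Finset.sum_congr rfl
    intro j _
    rw [mul_assoc]
    congr 1
    rw [show ∀ x y : ℝ, Real.cos x * (2 * Real.cos y) = Real.cos (x + y) + Real.cos (x - y) by
      intro x y; rw [Real.cos_add, Real.cos_sub]; ring]
    push_cast
    congr 2 <;> ring
  rw [e3, ← mul_assoc, one_div, inv_mul_cancel₀ (by positivity), one_mul]

/-- the nodes, smallest first -/
noncomputable def node (N l : ℕ) : ℝ := Real.cos (2 * π * ((N / 2 : ℕ) - l : ℝ) / N)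

theorem PDef_node {N : ℕ} (hN : 4 ≤ N) (k : ℕ) (hk : k ≤ N / 2) :
    PDef k (fun θ => ∏ l ∈ Finset.range k, (Real.cos θ - node N l)) := by
  have hN0 : (0:ℝ) < N := by exact_mod_cast (by omega : 0 < N)
  have hsin : ∀ i : ℕ, 1 ≤ i → i < N → 0 < Real.sin (i * (π / N)) := by
    intro i h1 h2
    have h1' : (0:ℝ) < i := by exact_mod_cast h1
    have h2' : (i:ℝ) < N := by exact_mod_cast h2
    apply Real.sin_pos_of_pos_of_lt_pi
    · have := Real.pi_pos; positivity
    · rw [mul_div_assoc', div_lt_iff₀ hN0]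
      nlinarith [Real.pi_pos]
  rcases Nat.even_or_odd' N with ⟨m, hm | hm⟩
  · have hm2 : N / 2 = m := by omega
    rcases k with _ | k
    · simpa using PDef.cos 0 0 (by simp)
    refine (PDef_even (α := π / N) k fun i h1 h2 => hsin i h1 (by omega)).congr fun θ => ?_
    apply Finset.prod_congr rfl
    intro l _
    unfold node
    rw [sub_eq_add_neg, ← Real.cos_pi_sub, hm2]
    have : (N:ℝ) = 2 * m := by exact_mod_cast hm
    have hm0 : (m:ℝ) ≠ 0 := by intro h; rw [h] at this; linarith
    congr 2
    rw [this]; field_simp; ring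
  · have hm2 : N / 2 = m := by omega
    refine (PDef_odd (α := π / N) k fun i h1 h2 => hsin i h1 (by omega)).congr fun θ => ?_
    apply Finset.prod_congr rfl
    intro l _
    unfold node
    rw [sub_eq_add_neg, ← Real.cos_pi_sub, hm2]
    have : (N:ℝ) = 2 * m + 1 := by exact_mod_cast hm
    have hm0 : (2 * (m:ℝ) + 1) ≠ 0 := by positivity
    congr 2
    rw [this]; field_simp; ring

theorem prod_double (x : ℝ) (b : ℕ → ℝ) (k : ℕ) :
    ∏ i ∈ Finset.range k, (x - b (i / 2)) =
      (∏ l ∈ Finset.range (k / 2), (x - b l)) * (∏ l ∈ Finset.range ((k+1) / 2), (x - b l)) := by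
  induction k with
  | zero => simp
  | succ k ih =>
    rw [Finset.prod_range_succ, ih]
    rcases Nat.even_or_odd' k with ⟨m, hm | hm⟩
    · rw [show (k+1+1)/2 = m+1 by omega, show (k+1)/2 = m by omega, show k/2=m by omega,
        Finset.prod_range_succ]
      ring
    · rw [show (k+1+1)/2 = m+1 by omega, show (k+1)/2 = m+1 by omega, show k/2=m by omega,
        Finset.prod_range_succ]
      ring

theorem PDef_newton {N : ℕ} (hN : 4 ≤ N) (k : ℕ) (hk : k < 2 * (N / 2)) :
    PDef k (fun θ => ∏ i ∈ Finset.range k, (Real.cos θ - node N (i / 2))) := by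
  have := (PDef_node hN (k/2) (by omega)).mul (PDef_node hN ((k+1)/2) (by omega))
  refine (this.mono (by omega)).congr fun θ => ?_
  rw [prod_double]

theorem sum_ne_eq {N : ℕ} (g : Fin N → Fin N → ℝ) :
    ∑ i, ∑ j, (if i ≠ j then g i j else 0) = ∑ i, ∑ j, g i j - ∑ i, g i i := by
  rw [← Finset.sum_sub_distrib]
  apply Finset.sum_congr rfl
  intro i _
  rw [eq_sub_iff_add_eq]
  have : ∑ j, (if i = j then g i j else 0) = g i i := by simp
  rw [← this, ← Finset.sum_add_distrib]
  apply Finset.sum_congr rfl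
  intro j _
  by_cases h : i = j <;> simp [h]

theorem node_le {N l : ℕ} (hN : 4 ≤ N) (hl : l < N / 2) : node N l ≤ Real.cos (2 * π / N) := by
  unfold node
  have hN0 : (0:ℝ) < N := by exact_mod_cast (by omega : 0 < N)
  have h1 : ((l:ℝ)) + 1 ≤ (N/2 : ℕ) := by exact_mod_cast hl
  have h2 : 2 * ((N/2 : ℕ) : ℝ) ≤ N := by exact_mod_cast (by omega : 2 * (N/2) ≤ N)
  have hl0 : (0:ℝ) ≤ l := by positivity
  have := Real.pi_pos
  apply Real.cos_le_cos_of_nonneg_of_le_pi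
  · positivity
  · rw [div_le_iff₀ hN0]
    nlinarith
  · apply div_le_div_of_nonneg_right _ hN0.le
    nlinarith

theorem node_last {N : ℕ} (hN : 4 ≤ N) : -1 < node N (N / 2 - 1) := by
  unfold node
  have hN0 : (4:ℝ) ≤ N := by exact_mod_cast hN
  rw [Nat.cast_sub (by omega)]
  have h := Real.pi_pos
  have : 0 ≤ Real.cos (2 * π * ((N / 2 : ℕ) - (((N / 2 : ℕ) : ℝ) - (1 : ℕ))) / N) := by
    apply Real.cos_nonneg_of_neg_pi_div_two_le_of_le
    · have : 0 ≤ 2 * π * ((N / 2 : ℕ) - (((N / 2 : ℕ) : ℝ) - (1 : ℕ))) / N := by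
        push_cast; simp; positivity
      linarith
    · rw [div_le_iff₀ (by linarith)]
      push_cast
      nlinarith
  linarith

theorem cos_eq_node_of_lt {N i j : ℕ} (hN : 4 ≤ N) (hi : i < N) (hij : j < i) :
    ∃ l < N / 2, Real.cos (2 * (i : ℝ) * π / N - 2 * (j : ℝ) * π / N) = node N l := by
  have hN0 : (N:ℝ) ≠ 0 := by exact_mod_cast (by omega : N ≠ 0)
  by_cases h : i - j ≤ N / 2
  · refine ⟨N / 2 - (i - j), by omega, ?_⟩
    unfold node
    rw [Nat.cast_sub h, Nat.cast_sub hij.le]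
    congr 1
    ring
  · refine ⟨N / 2 - (N - (i - j)), by omega, ?_⟩
    unfold node
    rw [Nat.cast_sub (by omega), Nat.cast_sub (by omega), Nat.cast_sub hij.le, ← Real.cos_two_pi_sub]
    congr 1
    field_simp
    ring

theorem cos_eq_node {N : ℕ} (hN : 4 ≤ N) {i j : Fin N} (hij : i ≠ j) :
    ∃ l < N / 2, Real.cos (2 * ((i : ℕ) : ℝ) * π / N - 2 * ((j : ℕ) : ℝ) * π / N) = node N l := by
  have : (i : ℕ) ≠ j := fun h => hij (Fin.ext h)
  rcases lt_or_gt_of_ne this with h | h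
  · rw [← Real.cos_neg, neg_sub]
    exact cos_eq_node_of_lt hN j.2 h
  · exact cos_eq_node_of_lt hN i.2 h

theorem main_angle {N : ℕ} (hN : 4 ≤ N) {B : ℝ} {φ : ℕ → ℝ → ℝ}
    (hφ : AMon (-1) B (2 * (N / 2)) φ) (hB : Real.cos (2 * π / N) < B)
    (x : Fin N → ℝ) (hx : ∀ i j, i ≠ j → Real.cos (x i - x j) ≤ B) :
    (∑ i : Fin N, ∑ j : Fin N, (if i ≠ j then
        φ 0 (Real.cos (2 * ((i : ℕ) : ℝ) * π / N - 2 * ((j : ℕ) : ℝ) * π / N)) else 0) ≤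
      ∑ i, ∑ j, (if i ≠ j then φ 0 (Real.cos (x i - x j)) else 0)) ∧
    ((∀ j ≤ 2 * (N / 2), ∀ t ∈ Set.Ioo (-1) B, 0 < φ j t) →
      ∑ i, ∑ j, (if i ≠ j then φ 0 (Real.cos (x i - x j)) else 0) =
      ∑ i : Fin N, ∑ j : Fin N, (if i ≠ j then
        φ 0 (Real.cos (2 * ((i : ℕ) : ℝ) * π / N - 2 * ((j : ℕ) : ℝ) * π / N)) else 0) →
      ∀ i j, i ≠ j → ∃ l < N / 2, Real.cos (x i - x j) = node N l) := by
  obtain ⟨n, hn⟩ : ∃ n, 2 * (N / 2) = n + 1 := ⟨2 * (N/2) - 1, by omega⟩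
  have hW : ∀ t, ∏ i ∈ Finset.range (n+1), (t - node N (i / 2)) =
      (∏ l ∈ Finset.range (N / 2), (t - node N l))^2 := by
    intro t
    rw [prod_double, ← hn, show 2 * (N / 2) / 2 = N / 2 by omega,
      show (2 * (N / 2) + 1) / 2 = N / 2 by omega, pow_two]
  have hnode : ∀ l < N / 2, node N l ∈ Set.Icc (-1) B := fun l hl =>
    ⟨Real.neg_one_le_cos _, (node_le hN hl).trans hB.le⟩
  rw [hn] at hφ ⊢
  obtain ⟨c, R, hc, hR, hnew, hRpos⟩ := hφ.exists_newton (a := fun i => node N (i / 2))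
    (fun i hi => hnode _ (by omega))
    (by
      have : n / 2 = N / 2 - 1 := by omega
      simp only [this]
      exact ⟨node_last hN, (node_le hN (by omega)).trans_lt hB⟩)
  simp only [hW] at hnew
  set W : ℝ → ℝ := fun t => ∏ l ∈ Finset.range (N / 2), (t - node N l) with hWdef
  set H : ℝ → ℝ := fun t => ∑ l ∈ Finset.range (n+1), c l * ∏ i ∈ Finset.range l, (t - node N (i / 2)) with hH
  have hPD : PDef n (fun θ => H (Real.cos θ)) := by
    refine PDef.sum _ _ fun l hl => .smul _ _ _ (hc l hl) ?_
    exact (PDef_newton hN l (by omega)).mono (by omega)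
  have hle := hPD.energy_le (N := N) (by omega) x
  -- decomposition
  have dec : ∀ z : Fin N → ℝ, (∀ i j, i ≠ j → Real.cos (z i - z j) ≤ B) →
      ∑ i, ∑ j, (if i ≠ j then φ 0 (Real.cos (z i - z j)) else 0) =
        (∑ i, ∑ j, H (Real.cos (z i - z j)) - N * H 1) +
        ∑ i, ∑ j, (if i ≠ j then R (Real.cos (z i - z j)) * W (Real.cos (z i - z j))^2 else 0) := by
    intro z hz
    have h1 := sum_ne_eq (fun i j => H (Real.cos (z i - z j)))
    simp only [sub_self, Real.cos_zero, Finset.sum_const, Finset.card_univ, Fintype.card_fin,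
      nsmul_eq_mul] at h1
    rw [← h1, ← Finset.sum_add_distrib]
    apply Finset.sum_congr rfl
    intro i _
    rw [← Finset.sum_add_distrib]
    apply Finset.sum_congr rfl
    intro j _
    by_cases hij : i = j
    · simp [hij]
    · simp only [ne_eq, hij, not_false_eq_true, if_true]
      exact hnew _ ⟨Real.neg_one_le_cos _, hz i j hij⟩
  have hy : ∀ i j : Fin N, i ≠ j → Real.cos (2 * ((i : ℕ) : ℝ) * π / N - 2 * ((j : ℕ) : ℝ) * π / N) ≤ B := by
    intro i j hij
    obtain ⟨l, hl, e⟩ := cos_eq_node hN hij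
    rw [e]; exact (hnode l hl).2
  have dy := dec (fun i => 2 * ((i : ℕ) : ℝ) * π / N) hy
  have dx := dec x hx
  have zy : ∑ i : Fin N, ∑ j : Fin N, (if i ≠ j then R (Real.cos (2 * ((i : ℕ) : ℝ) * π / N - 2 * ((j : ℕ) : ℝ) * π / N)) * W (Real.cos (2 * ((i : ℕ) : ℝ) * π / N - 2 * ((j : ℕ) : ℝ) * π / N))^2 else 0) = 0 := by
    apply Finset.sum_eq_zero
    intro i _
    apply Finset.sum_eq_zero
    intro j _
    split_ifs with hij
    · obtain ⟨l, hl, e⟩ := cos_eq_node hN hij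
      rw [e]
      have : W (node N l) = 0 := Finset.prod_eq_zero (Finset.mem_range.2 hl) (sub_self _)
      rw [this]; simp
    · rfl
  have nn : ∀ i j : Fin N, 0 ≤ (if i ≠ j then R (Real.cos (x i - x j)) * W (Real.cos (x i - x j))^2 else 0) := by
    intro i j
    split_ifs
    · exact mul_nonneg (hR _) (sq_nonneg _)
    · exact le_rfl
  have nn2 : ∀ i : Fin N, 0 ≤ ∑ j, (if i ≠ j then R (Real.cos (x i - x j)) * W (Real.cos (x i - x j))^2 else 0) :=
    fun i => Finset.sum_nonneg fun j _ => nn i j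
  have nn3 := Finset.sum_nonneg fun i (_ : i ∈ Finset.univ) => nn2 i
  refine ⟨?_, ?_⟩
  · rw [dx, dy, zy]
    linarith
  · intro hp heq i j hij
    rw [dx, dy, zy] at heq
    have h0 : ∑ i, ∑ j, (if i ≠ j then R (Real.cos (x i - x j)) * W (Real.cos (x i - x j))^2 else 0) = 0 := by
      linarith
    have h1 := (Finset.sum_eq_zero_iff_of_nonneg fun i _ => nn2 i).1 h0 i (Finset.mem_univ _)
    have h2 := (Finset.sum_eq_zero_iff_of_nonneg fun j _ => nn i j).1 h1 j (Finset.mem_univ _)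
    rw [if_pos hij] at h2
    have h3 := hRpos hp _ ⟨Real.neg_one_le_cos _, hx i j hij⟩
    have h4 : W (Real.cos (x i - x j)) = 0 := by
      rcases mul_eq_zero.1 h2 with h | h
      · exact absurd h h3.ne'
      · exact pow_eq_zero_iff (two_ne_zero) |>.1 h
    obtain ⟨l, hl, e⟩ := Finset.prod_eq_zero_iff.1 h4
    exact ⟨l, Finset.mem_range.1 hl, by linarith⟩

theorem norm_circlePt_sub (r a b : ℝ) :
    ‖circlePt r a - circlePt r b‖ ^ 2 = 2 * r^2 * (1 - Real.cos (a - b)) := by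
  rw [EuclideanSpace.norm_sq_eq]
  simp [circlePt, Fin.sum_univ_two]
  rw [Real.cos_sub]
  linear_combination r^2 * Real.sin_sq_add_cos_sq a + r^2 * Real.sin_sq_add_cos_sq b

theorem exists_circlePt {r : ℝ} (X : EuclideanSpace ℝ (Fin 2)) (h : ‖X‖ = r) :
    ∃ x, X = circlePt r x := by
  have h2 : ‖(⟨X 0, X 1⟩ : ℂ)‖ = r := by
    rw [← h, EuclideanSpace.norm_eq, Complex.norm_eq_sqrt_sq_add_sq]
    simp [Fin.sum_univ_two]
  refine ⟨Complex.arg ⟨X 0, X 1⟩, ?_⟩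
  have h3 := Complex.norm_mul_cos_arg ⟨X 0, X 1⟩
  have h4 := Complex.norm_mul_sin_arg ⟨X 0, X 1⟩
  rw [h2] at h3 h4
  ext i
  fin_cases i
  · simp [circlePt, h3]
  · simp [circlePt, h4]

theorem circlePt_add_int (r a : ℝ) (k : ℤ) : circlePt r (a + k * (2 * π)) = circlePt r a := by
  simp [circlePt, Real.cos_add_int_mul_two_pi, Real.sin_add_int_mul_two_pi]

noncomputable def clampPhi (r : ℝ) (f : ℝ → ℝ) (B : ℝ) (j : ℕ) (t : ℝ) : ℝ :=
  (2 * r^2)^j * ((-1)^j * iteratedDerivWithin j f (Set.Ioc 0 (4 * r ^ 2))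
    (2 * r^2 * (1 - max (-1) (min t B))))

theorem clamp_mem {r B : ℝ} (hr : 0 < r) (hB : B < 1) (t : ℝ) :
    2 * r^2 * (1 - max (-1) (min t B)) ∈ Set.Ioc 0 (4 * r^2) := by
  have h1 : max (-1) (min t B) < 1 := max_lt (by norm_num) ((min_le_right _ _).trans_lt hB)
  have h2 : -1 ≤ max (-1) (min t B) := le_max_left _ _
  have : 0 < r^2 := by positivity
  constructor
  · exact mul_pos (by positivity) (by linarith)
  · nlinarith

theorem AMon_clampPhi {r : ℝ} (hr : 0 < r) {f : ℝ → ℝ} {B : ℝ} (hB : B < 1) {n : ℕ}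
    (hf : ContDiffOn ℝ n f (Set.Ioc 0 (4 * r ^ 2)))
    (hsign : ∀ k ≤ n, ∀ t ∈ Set.Ioc (0 : ℝ) (4 * r ^ 2),
      0 ≤ (-1 : ℝ) ^ k * iteratedDerivWithin k f (Set.Ioc 0 (4 * r ^ 2)) t) :
    AMon (-1) B n (clampPhi r f B) := by
  have hU : UniqueDiffOn ℝ (Set.Ioc (0:ℝ) (4 * r^2)) := uniqueDiffOn_Ioc _ _
  refine ⟨?_, ?_, ?_⟩
  · intro j hj
    have h1 := hf.continuousOn_iteratedDerivWithin (m := j) (by exact_mod_cast hj) hU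
    have h2 := h1.comp_continuous (f := fun t => 2 * r^2 * (1 - max (-1) (min t B)))
      (by fun_prop) (clamp_mem hr hB)
    unfold clampPhi
    exact continuous_const.mul (continuous_const.mul h2)
  · intro j hj x
    exact mul_nonneg (by positivity) (hsign j hj _ (clamp_mem hr hB x))
  · intro j hj x hx
    have h1 := hf.differentiableOn_iteratedDerivWithin (m := j) (by exact_mod_cast hj) hU
    have hr2 : 0 < r^2 := by positivity
    have hu : 2 * r^2 * (1 - x) ∈ Set.Ioo 0 (4 * r^2) := by
      constructor
      · exact mul_pos (by positivity) (by linarith [hx.2])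
      · nlinarith [hx.1]
    have hnh : Set.Ioc 0 (4 * r^2) ∈ nhds (2 * r^2 * (1 - x)) :=
      Filter.mem_of_superset (Ioo_mem_nhds hu.1 hu.2) Set.Ioo_subset_Ioc_self
    have h2 := ((h1 _ ⟨hu.1, hu.2.le⟩).hasDerivWithinAt).hasDerivAt hnh
    rw [← iteratedDerivWithin_succ] at h2
    have h3 : HasDerivAt (fun t => 2 * r^2 * (1 - t)) (2 * r^2 * (-1)) x :=
      ((hasDerivAt_id x).const_sub 1).const_mul _
    have h4 := ((h2.comp x h3).const_mul ((-1)^j)).const_mul ((2 * r^2)^j)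
    have cl : max (-1) (min x B) = x := by rw [min_eq_left hx.2.le, max_eq_right hx.1.le]
    have h5 : HasDerivAt (clampPhi r f B j) _ x := h4.congr_of_eventuallyEq (by
      filter_upwards [Ioo_mem_nhds hx.1 hx.2] with t ht
      have cl : max (-1) (min t B) = t := by rw [min_eq_left ht.2.le, max_eq_right ht.1.le]
      simp only [clampPhi, cl, Function.comp])
    refine h5.congr_deriv ?_
    simp only [clampPhi, cl]
    ring

theorem exists_bound {N : ℕ} (hN : 4 ≤ N) (x : Fin N → ℝ)
    (hx : ∀ i j, i ≠ j → Real.cos (x i - x j) < 1) :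
    ∃ B < 1, Real.cos (2 * π / N) < B ∧ ∀ i j, i ≠ j → Real.cos (x i - x j) ≤ B := by
  have h0 : Real.cos (2 * π / N) < 1 := by
    have hN0 : (4:ℝ) ≤ N := by exact_mod_cast hN
    have h := Real.pi_pos
    rw [← Real.cos_zero]
    apply Real.cos_lt_cos_of_nonneg_of_le_pi le_rfl
    · rw [div_le_iff₀ (by linarith)]
      nlinarith
    · positivity
  let s : Finset ℝ := insert (Real.cos (2 * π / N))
    (((Finset.univ : Finset (Fin N × Fin N)).filter (fun p => p.1 ≠ p.2)).image
      (fun p => Real.cos (x p.1 - x p.2)))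
  have hs : s.Nonempty := Finset.insert_nonempty _ _
  have hlt : s.max' hs < 1 := by
    rw [Finset.max'_lt_iff]
    intro y hy
    simp only [s, Finset.mem_insert, Finset.mem_image, Finset.mem_filter] at hy
    rcases hy with rfl | ⟨p, hp, rfl⟩
    · exact h0
    · exact hx _ _ hp.2
  refine ⟨(s.max' hs + 1) / 2, by linarith, ?_, ?_⟩
  · have := s.le_max' (Real.cos (2 * π / N)) (Finset.mem_insert_self _ _)
    linarith
  · intro i j hij
    have := s.le_max' (Real.cos (x i - x j)) (Finset.mem_insert_of_mem
      (Finset.mem_image.2 ⟨(i, j), by simpa using hij, rfl⟩))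
    linarith

theorem pairEnergy_eq {N : ℕ} {r B : ℝ} (f : ℝ → ℝ) (z : Fin N → ℝ)
    (hz : ∀ i j, i ≠ j → Real.cos (z i - z j) ≤ B) :
    pairEnergy N f (fun k => circlePt r (z k)) =
      ∑ i, ∑ j, (if i ≠ j then clampPhi r f B 0 (Real.cos (z i - z j)) else 0) := by
  unfold pairEnergy
  apply Finset.sum_congr rfl
  intro i _
  apply Finset.sum_congr rfl
  intro j _
  split_ifs with hij
  · rw [norm_circlePt_sub]
    simp only [clampPhi, pow_zero, one_mul, iteratedDerivWithin_zero]
    rw [min_eq_left (hz i j hij), max_eq_right (Real.neg_one_le_cos _)]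
  · rfl

theorem exists_int_angle {N l : ℕ} (hN : 4 ≤ N) {y : ℝ} (h : Real.cos y = node N l) :
    ∃ d : ℤ, y = 2 * d * π / N := by
  have hN0 : (N:ℝ) ≠ 0 := by exact_mod_cast (by omega : N ≠ 0)
  unfold node at h
  generalize N / 2 = m at h
  obtain ⟨k, hk | hk⟩ := Real.cos_eq_cos_iff.1 h.symm
  · refine ⟨k * N + ((m : ℤ) - l), ?_⟩
    rw [hk]; push_cast; field_simp; try ring
  · refine ⟨k * N - ((m : ℤ) - l), ?_⟩
    rw [hk]; push_cast; field_simp; try ring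

/-- For `N ≥ 4`, `m = ⌊N/2⌋` and `f` completely monotonic up to order `2m` on `(0,4r²]`,
`N` equally spaced points on the circle `C_r` minimize the energy `Σ_{i≠j} f(‖x_i−x_j‖²)`
among `N`-tuples of pairwise distinct points of `C_r`; for strictly completely monotonic
`f` they are the only minimizers. -/
theorem equally_spaced_minimize_energy_on_circle
    (N : ℕ) (hN : 4 ≤ N) (r : ℝ) (hr : 0 < r) (f : ℝ → ℝ)
    (hf : ContDiffOn ℝ ((2 * (N / 2) : ℕ)) f (Set.Ioc 0 (4 * r ^ 2)))
    (hsign : ∀ k ≤ 2 * (N / 2), ∀ t ∈ Set.Ioc (0 : ℝ) (4 * r ^ 2),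
      0 ≤ (-1 : ℝ) ^ k * iteratedDerivWithin k f (Set.Ioc 0 (4 * r ^ 2)) t) :
    (∀ θ : ℝ, ∀ X : Fin N → EuclideanSpace ℝ (Fin 2),
      (∀ i, ‖X i‖ = r) → Function.Injective X →
      pairEnergy N f (fun k : Fin N => circlePt r (θ + 2 * (k : ℕ) * π / N)) ≤
        pairEnergy N f X) ∧
    ((∀ k ≤ 2 * (N / 2), ∀ t ∈ Set.Ioo (0 : ℝ) (4 * r ^ 2),
        0 < (-1 : ℝ) ^ k * iteratedDerivWithin k f (Set.Ioc 0 (4 * r ^ 2)) t) →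
      ∀ X : Fin N → EuclideanSpace ℝ (Fin 2),
        (∀ i, ‖X i‖ = r) → Function.Injective X →
        pairEnergy N f X =
          pairEnergy N f (fun k : Fin N => circlePt r (2 * (k : ℕ) * π / N)) →
        ∃ (θ : ℝ) (σ : Equiv.Perm (Fin N)),
          ∀ k : Fin N, X k = circlePt r (θ + 2 * ((σ k : ℕ) : ℝ) * π / N)) := by
  have hN0 : (N:ℝ) ≠ 0 := by exact_mod_cast (by omega : N ≠ 0)
  have hr2 : 0 < r^2 := by positivity
  have key : ∀ X : Fin N → EuclideanSpace ℝ (Fin 2), (∀ i, ‖X i‖ = r) → Function.Injective X →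
      ∃ x : Fin N → ℝ, X = (fun k => circlePt r (x k)) ∧ ∃ B < 1, Real.cos (2 * π / N) < B ∧
        ∀ i j, i ≠ j → Real.cos (x i - x j) ≤ B := by
    intro X hX hinj
    choose x hx using fun i => exists_circlePt (X i) (hX i)
    refine ⟨x, funext hx, exists_bound hN x ?_⟩
    intro i j hij
    refine lt_of_le_of_ne (Real.cos_le_one _) fun h => hij (hinj ?_)
    have := norm_circlePt_sub r (x i) (x j)
    rw [h, ← hx, ← hx] at this
    simp at this
    exact sub_eq_zero.1 this
  have eqE : ∀ (θ B : ℝ), Real.cos (2 * π / N) < B →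
      pairEnergy N f (fun k : Fin N => circlePt r (θ + 2 * (k : ℕ) * π / N)) =
      ∑ i : Fin N, ∑ j : Fin N, (if i ≠ j then
        clampPhi r f B 0 (Real.cos (2 * ((i : ℕ) : ℝ) * π / N - 2 * ((j : ℕ) : ℝ) * π / N)) else 0) := by
    intro θ B hB
    have h1 : ∀ i j : Fin N, (θ + 2 * ((i : ℕ) : ℝ) * π / N) - (θ + 2 * ((j : ℕ) : ℝ) * π / N) =
        2 * ((i : ℕ) : ℝ) * π / N - 2 * ((j : ℕ) : ℝ) * π / N := fun i j => by ring
    rw [pairEnergy_eq (B := B) f (fun k : Fin N => θ + 2 * ((k : ℕ) : ℝ) * π / N)]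
    · simp only [h1]
    · intro i j hij
      rw [h1]
      obtain ⟨l, hl, e⟩ := cos_eq_node hN hij
      rw [e]; exact (node_le hN hl).trans hB.le
  refine ⟨?_, ?_⟩
  · intro θ X hX hinj
    obtain ⟨x, rfl, B, hB1, hB, hxB⟩ := key X hX hinj
    rw [eqE θ B hB, pairEnergy_eq f x hxB]
    exact (main_angle hN (AMon_clampPhi hr hB1 hf hsign) hB x hxB).1
  · intro hstr X hX hinj heq
    obtain ⟨x, rfl, B, hB1, hB, hxB⟩ := key X hX hinj
    have e0 := eqE 0 B hB
    simp only [zero_add] at e0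
    rw [e0, pairEnergy_eq f x hxB] at heq
    have hnodes := (main_angle hN (AMon_clampPhi hr hB1 hf hsign) hB x hxB).2 (by
      intro j hj t ht
      refine mul_pos (by positivity) (hstr j hj _ ?_)
      rw [min_eq_left ht.2.le, max_eq_right ht.1.le]
      constructor
      · exact mul_pos (by positivity) (by linarith [ht.2])
      · nlinarith [ht.1]) heq
    let z : Fin N := ⟨0, by omega⟩
    have hd : ∀ k, ∃ d : ℤ, x k - x z = 2 * d * π / N := by
      intro k
      by_cases hk : k = z
      · exact ⟨0, by simp [hk]⟩
      · obtain ⟨l, _, e⟩ := hnodes k z hk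
        exact exists_int_angle hN e
    choose d hd using hd
    have hNz : (0:ℤ) < N := by exact_mod_cast (by omega : 0 < N)
    have hm : ∀ k, ∃ s : Fin N, ((s : ℕ) : ℤ) = d k % N := by
      intro k
      have h1 := Int.emod_nonneg (d k) hNz.ne'
      have h2 := Int.emod_lt_of_pos (d k) hNz
      exact ⟨⟨(d k % N).toNat, by omega⟩, by simp; omega⟩
    choose s hs using hm
    have hX' : ∀ k, circlePt r (x k) = circlePt r (x z + 2 * ((s k : ℕ) : ℝ) * π / N) := by
      intro k
      rw [← circlePt_add_int r (x z + 2 * ((s k : ℕ) : ℝ) * π / N) (d k / N)]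
      congr 1
      have h1 : d k = N * (d k / N) + ((s k : ℕ) : ℤ) := by
        rw [hs]; exact (Int.mul_ediv_add_emod (d k) N).symm
      have h2 : (d k : ℝ) = N * ((d k / N : ℤ) : ℝ) + ((s k : ℕ) : ℝ) := by exact_mod_cast h1
      have h3 := hd k
      rw [h2] at h3
      rw [eq_add_of_sub_eq h3]
      field_simp
      try ring
    have hsinj : Function.Injective s := by
      intro a b hab
      apply hinj
      show circlePt r (x a) = circlePt r (x b)
      rw [hX' a, hX' b, hab]
    exact ⟨x z, Equiv.ofBijective s (Finite.injective_iff_bijective.1 hsinj), fun k => hX' k⟩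
end
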